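/- arXiv:1702.07179 — 3 statements merged into one kernel-verified Lean document; each statement's English description precedes it below -/
import Mathlib

section
/- Let Q be a connected tight multimatroid and let A be a non-empty subtransversal of Q such that the minor Q|A is connected. If e ∈ A, then either (i) Q|e is connected, or (ii) for every element x ≠ e lying in the same skew class as e, the minor Q|x is connected and has Q|A as a minor (i.e., there is a subtransversal B of Q|x with (Q|x)|B = Q|A). -/
/-!
Suppose `Q|e` is disconnected, say with sides `X` and `Y`, where `ω` is the skew class of `e` and
`X`, `Y` partition the other classes.  Write `e ∈ cl T` for `r(T + e) = r(T)`.  By the skew axiom,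
two distinct elements of `ω` are never both in the closure of one subtransversal.

The main step (`Sep.exists_inCl`) is that each side of the separation spans `e`: there are
subtransversals `T ⊆ X` and `S ⊆ Y` with `e ∈ cl T` and `e ∈ cl S`.  If `X` did not span `e`,
rank would be additive over `X` and its complement in `Q`, contradicting connectivity.  The only
delicate point is additivity for sets containing some `x ∈ ω` other than `e`; it rests on
`inCl_of_superset`, which says that if `e` is in the closure of no subtransversal containing `P`,
then larger subtransversals cannot bring a new element of `ω` into the closure.  This is where
tightness is used.

If `T ⊆ X` spans `e`, then for each `x ≠ e` in `ω` the minors `Q|(T + x)` and `Q|e` agree on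
`Y` (`Sep.rank_swap`).  Two consequences follow.

* The minor `Q|A` is a connected minor of `Q|e`, so `A` covers one side, say `X`.  Replacing `e` by
  `x` and `A ∩ X` by a transversal `T` of `X` spanning `e` does not change the minor
  (`exists_minor_of_cover`), so `Q|A` is a minor of `Q|x`.
* If `Z` is a proper separator of `Q|x`, then `Z ∩ X` and `Z ∩ Y` are separators of `Q|e`
  (`Sep.inter`).  A nonempty one of them spans `e`, while the complement of `Z` spans `x`; the union
  of the two spanning sets is a subtransversal with both `e` and `x` in its closure, which is
  impossible.  Hence `Q|x` is connected (`minorConnected_of_sep`).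
-/

noncomputable section
open scoped Classical

/-- The data of a multimatroid: a finite ground set `U`, a partition `Ω` of `U` into
nonempty skew classes, and a rank function `r` (only its values on subtransversals matter). -/
structure MultimatroidData (α : Type*) [DecidableEq α] where
  U : Finset α
  Ω : Finset (Finset α)
  r : Finset α → ℕ
  classes_nonempty : ∀ ω ∈ Ω, ω.Nonempty
  classes_subset : ∀ ω ∈ Ω, ω ⊆ U
  classes_cover : ∀ x ∈ U, ∃ ω ∈ Ω, x ∈ ω
  classes_disjoint : ∀ ω₁ ∈ Ω, ∀ ω₂ ∈ Ω, ω₁ ≠ ω₂ → Disjoint ω₁ ω₂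

variable {α : Type*} [DecidableEq α]

/-- A subtransversal: a set meeting each skew class in at most one element. -/
def MultimatroidData.Subtr (Q : MultimatroidData α) (A : Finset α) : Prop :=
  A ⊆ Q.U ∧ ∀ ω ∈ Q.Ω, (A ∩ ω).card ≤ 1

/-- A multimatroid: the rank function satisfies axioms (1)–(4). -/
structure Multimatroid (α : Type*) [DecidableEq α] extends MultimatroidData α where
  rank_empty : r ∅ = 0
  rank_step : ∀ A x ω, toMultimatroidData.Subtr A → ω ∈ Ω → x ∈ ω → Disjoint ω A →
    r A ≤ r (insert x A) ∧ r (insert x A) ≤ r A + 1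
  rank_submod : ∀ A B, toMultimatroidData.Subtr (A ∪ B) →
    r (A ∪ B) + r (A ∩ B) ≤ r A + r B
  rank_skew : ∀ A x y ω, toMultimatroidData.Subtr A → ω ∈ Ω → x ∈ ω → y ∈ ω → x ≠ y →
    Disjoint ω A → 2 * r A + 1 ≤ r (insert x A) + r (insert y A)

namespace Multimatroid

variable (Q : Multimatroid α)

/-- Subtransversals of a multimatroid. -/
def Subtr (A : Finset α) : Prop := Q.toMultimatroidData.Subtr A

/-- The skew classes of the minor `Q|A`: those skew classes of `Q` disjoint from `A`. -/
def minorClasses (A : Finset α) : Finset (Finset α) := Q.Ω.filter fun ω => Disjoint ω A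

/-- The ground set of the minor `Q|A`. -/
def minorGround (A : Finset α) : Finset α := (Q.minorClasses A).biUnion id

/-- Subtransversals of the minor `Q|A`. -/
def MinorSubtr (A S : Finset α) : Prop :=
  S ⊆ Q.minorGround A ∧ ∀ ω ∈ Q.minorClasses A, (S ∩ ω).card ≤ 1

/-- `X` is a separator of the minor `Q|A` (whose rank function is
`S ↦ r(S ∪ A) − r(A)`, here expressed additively). -/
def IsMinorSeparator (A X : Finset α) : Prop :=
  X ⊆ Q.minorGround A ∧ (∀ ω ∈ Q.minorClasses A, ω ⊆ X ∨ Disjoint ω X) ∧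
  ∀ S, Q.MinorSubtr A S →
    Q.r (S ∪ A) + Q.r A = Q.r ((S ∩ X) ∪ A) + Q.r ((S \ X) ∪ A)

/-- The minor `Q|A` is connected: it has no proper separator. -/
def MinorConnected (A : Finset α) : Prop :=
  ¬ ∃ X, Q.IsMinorSeparator A X ∧ X.Nonempty ∧ X ≠ Q.minorGround A

/-- `X` is a separator of `Q`: a union of skew classes such that the rank is additive
over the partition `(X, U − X)`. -/
def IsSeparator (X : Finset α) : Prop :=
  X ⊆ Q.U ∧ (∀ ω ∈ Q.Ω, ω ⊆ X ∨ Disjoint ω X) ∧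
  ∀ S, Q.Subtr S → Q.r S = Q.r (S ∩ X) + Q.r (S \ X)

/-- `Q` is connected: it has no proper separator. -/
def Connected : Prop := ¬ ∃ X, Q.IsSeparator X ∧ X.Nonempty ∧ X ≠ Q.U

/-- `A` is a near-transversal avoiding the skew class `ω`: a subtransversal disjoint
from `ω` meeting every other skew class. -/
def NearTransversalAvoiding (ω A : Finset α) : Prop :=
  Q.Subtr A ∧ Disjoint A ω ∧ ∀ ω' ∈ Q.Ω, ω' ≠ ω → (A ∩ ω').Nonempty

/-- A multimatroid is non-degenerate if every skew class has at least two elements. -/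
def Nondegenerate : Prop := ∀ ω ∈ Q.Ω, 2 ≤ ω.card

/-- A multimatroid is tight if it is non-degenerate and for every skew class `ω` and
every near-transversal `A` avoiding `ω`, `Σ_{x∈ω} (r(A∪x) − r(A)) = |ω| − 1`. -/
def Tight : Prop :=
  Q.Nondegenerate ∧ ∀ ω ∈ Q.Ω, ∀ A, Q.NearTransversalAvoiding ω A →
    ∑ x ∈ ω, (Q.r (insert x A) - Q.r A) = ω.card - 1

/-- An independent set: a subtransversal whose rank equals its cardinality. -/
def Indep (S : Finset α) : Prop := Q.Subtr S ∧ Q.r S = S.card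

/-- A basis: a maximal independent set. -/
def IsBasis (B : Finset α) : Prop := Q.Indep B ∧ ∀ S, Q.Indep S → B ⊆ S → S = B

/-- A circuit: a dependent subtransversal all of whose proper subsets are independent. -/
def IsCircuit (C : Finset α) : Prop :=
  Q.Subtr C ∧ Q.r C ≠ C.card ∧ ∀ C' ⊂ C, Q.r C' = C'.card

end Multimatroid

namespace Multimatroid

variable {Q : Multimatroid α}

/-! ### Subtransversals and closure -/

/-- The element `x` lies in the closure of `N`: adding it does not raise the rank. -/
def InCl (Q : Multimatroid α) (x : α) (N : Finset α) : Prop := Q.r (insert x N) = Q.r N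

theorem subtr_iff {N : Finset α} : Q.Subtr N ↔
    N ⊆ Q.U ∧ ∀ ω ∈ Q.Ω, ∀ a ∈ N, ∀ b ∈ N, a ∈ ω → b ∈ ω → a = b := by
  unfold Subtr MultimatroidData.Subtr
  simp only [Finset.card_le_one, Finset.mem_inter]
  grind

theorem class_unique {ω₁ ω₂ : Finset α} {a : α} (h₁ : ω₁ ∈ Q.Ω) (h₂ : ω₂ ∈ Q.Ω)
    (ha₁ : a ∈ ω₁) (ha₂ : a ∈ ω₂) : ω₁ = ω₂ := by
  by_contra h
  exact Finset.disjoint_left.1 (Q.classes_disjoint _ h₁ _ h₂ h) ha₁ ha₂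

theorem Subtr.mono {N M : Finset α} (hM : Q.Subtr M) (h : N ⊆ M) : Q.Subtr N := by
  rw [subtr_iff] at *
  grind

theorem Subtr.insert {N ω : Finset α} {x : α} (hN : Q.Subtr N) (hω : ω ∈ Q.Ω)
    (hx : x ∈ ω) (hd : Disjoint N ω) : Q.Subtr (insert x N) := by
  rw [subtr_iff] at *
  rw [Finset.disjoint_left] at hd
  refine ⟨Finset.insert_subset (Q.classes_subset _ hω hx) hN.1, fun ω' hω' a ha b hb haω hbω => ?_⟩
  rcases Finset.mem_insert.1 ha with h₁ | h₁ <;> rcases Finset.mem_insert.1 hb with h₂ | h₂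
  · exact h₁.trans h₂.symm
  · exact absurd (class_unique hω hω' hx (h₁ ▸ haω) ▸ hbω) (hd h₂)
  · exact absurd (class_unique hω hω' hx (h₂ ▸ hbω) ▸ haω) (hd h₁)
  · exact hN.2 ω' hω' a h₁ b h₂ haω hbω

/-- Subtransversals living on the two sides of a union of skew classes can be joined. -/
theorem Subtr.union {S T X : Finset α} (hX : ∀ ω ∈ Q.Ω, ω ⊆ X ∨ Disjoint ω X)
    (hS : Q.Subtr S) (hT : Q.Subtr T) (hSX : Disjoint S X) (hTX : T ⊆ X) :
    Q.Subtr (S ∪ T) := by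
  rw [subtr_iff] at *
  simp only [Finset.disjoint_left] at *
  refine ⟨Finset.union_subset hS.1 hT.1, fun ω hω a ha b hb haω hbω => ?_⟩
  have := hX ω hω
  grind

theorem step {N ω : Finset α} {x : α} (hN : Q.Subtr N) (hω : ω ∈ Q.Ω)
    (hx : x ∈ ω) (hd : Disjoint N ω) :
    Q.r N ≤ Q.r (insert x N) ∧ Q.r (insert x N) ≤ Q.r N + 1 :=
  Q.rank_step N x ω hN hω hx hd.symm

theorem succ_of_not_inCl {N ω : Finset α} {x : α} (hN : Q.Subtr N) (hω : ω ∈ Q.Ω)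
    (hx : x ∈ ω) (hd : Disjoint N ω) (h : ¬ Q.InCl x N) : Q.r (insert x N) = Q.r N + 1 := by
  have := step hN hω hx hd
  unfold InCl at h
  omega

theorem InCl.mono {N M ω : Finset α} {x : α} (h : Q.InCl x N) (hM : Q.Subtr M)
    (hω : ω ∈ Q.Ω) (hx : x ∈ ω) (hd : Disjoint M ω) (hNM : N ⊆ M) : Q.InCl x M := by
  have hxM : x ∉ M := fun h => Finset.disjoint_left.1 hd h hx
  have h1 : insert x N ∪ M = insert x M := by grind
  have h2 : insert x N ∩ M = N := by grind
  have := Q.rank_submod (insert x N) M (by rw [h1]; exact hM.insert hω hx hd)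
  rw [h1, h2] at this
  have := step hM hω hx hd
  unfold InCl at *
  omega

theorem not_inCl_both {N ω : Finset α} {x y : α} (hN : Q.Subtr N) (hω : ω ∈ Q.Ω)
    (hx : x ∈ ω) (hy : y ∈ ω) (hxy : x ≠ y) (hd : Disjoint N ω)
    (h : Q.InCl x N) : ¬ Q.InCl y N := by
  intro h'
  have := Q.rank_skew N x y ω hN hω hx hy hxy hd.symm
  unfold InCl at *
  omega

theorem rank_union_le {S T : Finset α} (h : Q.Subtr (S ∪ T)) :
    Q.r (S ∪ T) ≤ Q.r S + Q.r T := by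
  have := Q.rank_submod S T h
  omega

theorem rank_mono {N M : Finset α} (hM : Q.Subtr M) (h : N ⊆ M) : Q.r N ≤ Q.r M := by
  suffices H : ∀ K, Q.Subtr (K ∪ N) → Q.r N ≤ Q.r (K ∪ N) by
    have := H M
    rw [Finset.union_eq_left.2 h] at this
    exact this hM
  intro K
  induction K using Finset.induction_on with
  | empty => simp
  | insert a K ha ih =>
    intro hK
    rw [Finset.insert_union] at hK ⊢
    have hK' := hK.mono (Finset.subset_insert a _)
    by_cases haN : a ∈ K ∪ N
    · rw [Finset.insert_eq_of_mem haN]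
      exact ih hK'
    obtain ⟨ω, hω, haω⟩ := Q.classes_cover a (hK.1 (Finset.mem_insert_self a _))
    have hd : Disjoint (K ∪ N) ω := by
      rw [Finset.disjoint_left]
      intro b hb hbω
      have := (subtr_iff.1 hK).2 ω hω a (by simp) b (Finset.mem_insert_of_mem hb) haω hbω
      grind
    exact (ih hK').trans (step hK' hω haω hd).1

theorem disjoint_insert_class {N ω ω' : Finset α} {y : α} (hω : ω ∈ Q.Ω) (hω' : ω' ∈ Q.Ω)
    (hne : ω' ≠ ω) (hy : y ∈ ω') (hd : Disjoint N ω) : Disjoint (insert y N) ω := by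
  rw [Finset.disjoint_insert_left]
  exact ⟨fun h => hne (class_unique hω' hω hy h), hd⟩

/-! ### Extending subtransversals -/

/-- A class of at least two elements always offers an extension of `N` keeping `x` outside
the closure: by the skew axiom at most one element of the class can pull `x` in. -/
theorem exists_not_inCl_insert (hQ : Q.Nondegenerate) {N ω ω' : Finset α} {x : α}
    (hN : Q.Subtr N) (hω : ω ∈ Q.Ω) (hx : x ∈ ω) (hd : Disjoint N ω) (hω' : ω' ∈ Q.Ω)
    (hne : ω' ≠ ω) (hd' : Disjoint N ω') (h : ¬ Q.InCl x N) :
    ∃ y ∈ ω', ¬ Q.InCl x (insert y N) := by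
  by_contra! hc
  obtain ⟨y, hy, z, hz, hyz⟩ := Finset.one_lt_card.1 (hQ ω' hω')
  have h1 := hc y hy
  have h2 := hc z hz
  have h3 := succ_of_not_inCl hN hω hx hd h
  have h4 := step hN hω' hy hd'
  have h5 := step hN hω' hz hd'
  have h6 := Q.rank_skew (insert x N) y z ω' (hN.insert hω hx hd) hω' hy hz hyz
    (disjoint_insert_class hω' hω hne.symm hx hd').symm
  unfold InCl at h1 h2
  rw [Finset.insert_comm] at h1 h2
  omega

/-- A property of subtransversals that can be preserved class by class can be preserved while
extending to meet every class of a family `Ψ`. -/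
theorem exists_extension {ω : Finset α} (hω : ω ∈ Q.Ω) (P : Finset α → Prop)
    (hstep : ∀ N ω', Q.Subtr N → Disjoint N ω → ω' ∈ Q.Ω → ω' ≠ ω → Disjoint N ω' → P N →
      ∃ y ∈ ω', P (insert y N))
    {N : Finset α} (hN : Q.Subtr N) (hd : Disjoint N ω) (hP : P N)
    (Ψ : Finset (Finset α)) (hΨ : ∀ ω' ∈ Ψ, ω' ∈ Q.Ω ∧ ω' ≠ ω) :
    ∃ M, N ⊆ M ∧ Q.Subtr M ∧ Disjoint M ω ∧ P M ∧ M ⊆ N ∪ Ψ.biUnion id ∧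
      ∀ ω' ∈ Ψ, ¬ Disjoint M ω' := by
  induction Ψ using Finset.induction_on with
  | empty => exact ⟨N, by simp_all⟩
  | insert ω' Ψ hn ih =>
    obtain ⟨M, h1, h2, h3, h4, h5, h6⟩ := ih fun ω' h => hΨ ω' (Finset.mem_insert_of_mem h)
    obtain ⟨hω', hne⟩ := hΨ ω' (Finset.mem_insert_self _ _)
    by_cases hM : Disjoint M ω'
    · obtain ⟨y, hy, hPy⟩ := hstep M ω' h2 h3 hω' hne hM h4
      refine ⟨insert y M, h1.trans (Finset.subset_insert _ _), h2.insert hω' hy hM,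
        disjoint_insert_class hω hω' hne hy h3, hPy, ?_, ?_⟩
      · rw [Finset.biUnion_insert]
        simp only [id]
        grind
      · intro ω'' h hdis
        rw [Finset.disjoint_insert_left] at hdis
        rcases Finset.mem_insert.1 h with rfl | h
        · exact hdis.1 hy
        · exact h6 _ h hdis.2
    · refine ⟨M, h1, h2, h3, h4, ?_, ?_⟩
      · rw [Finset.biUnion_insert]
        simp only [id]
        grind
      · intro ω'' h
        rcases Finset.mem_insert.1 h with rfl | h
        · exact hM
        · exact h6 _ h

/-! ### Tightness -/

theorem Tight.exists_inCl (hQ : Q.Tight) {N ω : Finset α} (hω : ω ∈ Q.Ω) (hN : Q.Subtr N)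
    (hd : Disjoint N ω) (hfull : ∀ ω' ∈ Q.Ω, ω' ≠ ω → ¬ Disjoint N ω') :
    ∃ z ∈ ω, Q.InCl z N := by
  by_contra! hc
  have h1 := hQ.2 ω hω N ⟨hN, hd, fun ω' h hne => by
    rw [← Finset.not_disjoint_iff_nonempty_inter]; exact hfull ω' h hne⟩
  have h2 : ∑ x ∈ ω, (Q.r (insert x N) - Q.r N) = ∑ x ∈ ω, 1 :=
    Finset.sum_congr rfl fun x hx => by
      have := succ_of_not_inCl hN hω hx hd (hc x hx)
      omega
  have h3 := hQ.1 ω hω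
  simp at h2
  omega

/-- Removing one element, for near-transversals: if `e` is in the closure of no subtransversal
containing `P`, then `x` stays in the closure when `t ∉ P` is removed.  Tightness on the near-transversal
`N - t + e` produces `u` skew to `t` with `u ∈ cl (N - t)`, and tightness on `N - t + u` then
produces `z ∈ ω` in the closure of `N - t`; necessarily `z = x`. -/
theorem inCl_erase_of_full (hQ : Q.Tight) {P N ω : Finset α} {e x t : α} (hω : ω ∈ Q.Ω)
    (he : e ∈ ω) (hx : x ∈ ω)
    (hcl : ∀ M, P ⊆ M → Q.Subtr M → Disjoint M ω → ¬ Q.InCl e M)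
    (hN : Q.Subtr N) (hd : Disjoint N ω) (hPN : P ⊆ N)
    (hfull : ∀ ω' ∈ Q.Ω, ω' ≠ ω → ¬ Disjoint N ω') (ht : t ∈ N) (htP : t ∉ P)
    (h : Q.InCl x N) : Q.InCl x (N.erase t) := by
  obtain ⟨ω', hω', htω'⟩ := Q.classes_cover t (hN.1 ht)
  have hne : ω' ≠ ω := by rintro rfl; exact Finset.disjoint_left.1 hd ht htω'
  have hN0 : Q.Subtr (N.erase t) := hN.mono (Finset.erase_subset _ _)
  have hd0 : Disjoint (N.erase t) ω := hd.mono_left (Finset.erase_subset _ _)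
  have hd0' : Disjoint (N.erase t) ω' := by
    rw [Finset.disjoint_left]
    intro b hb hbω
    have := (subtr_iff.1 hN).2 ω' hω' t ht b (Finset.mem_of_mem_erase hb) htω' hbω
    grind
  have hP0 : P ⊆ N.erase t := by grind
  have hfull0 : ∀ ω'' ∈ Q.Ω, ω'' ≠ ω → ω'' ≠ ω' → ¬ Disjoint (N.erase t) ω'' := by
    intro ω'' h1 h2 h3 h4
    obtain ⟨b, hb, hbω⟩ := Finset.not_disjoint_iff.1 (hfull ω'' h1 h2)
    refine Finset.disjoint_left.1 h4 (Finset.mem_erase.2 ⟨?_, hb⟩) hbω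
    rintro rfl
    exact h3 (class_unique h1 hω' hbω htω')
  obtain ⟨u, hu, hu'⟩ := hQ.exists_inCl hω' (hN0.insert hω he hd0)
    (disjoint_insert_class hω' hω hne.symm he hd0') (by
      intro ω'' h1 h2 h3
      rw [Finset.disjoint_insert_left] at h3
      by_cases h4 : ω'' = ω
      · exact h3.1 (h4 ▸ he)
      · exact hfull0 ω'' h1 h4 h2 h3.2)
  have hNu := hN0.insert hω' hu hd0'
  have hdu := disjoint_insert_class hω hω' hne hu hd0
  have h1 := succ_of_not_inCl hN0 hω he hd0 (hcl _ hP0 hN0 hd0)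
  have h2 := succ_of_not_inCl hNu hω he hdu (hcl _ (hP0.trans (Finset.subset_insert _ _)) hNu hdu)
  have h3 := step hN0 hω' hu hd0'
  unfold InCl at hu'
  rw [Finset.insert_comm] at hu'
  obtain ⟨z, hz, hz'⟩ := hQ.exists_inCl hω hNu hdu (by
      intro ω'' h1 h2 h3
      rw [Finset.disjoint_insert_left] at h3
      by_cases h4 : ω'' = ω'
      · exact h3.1 (h4 ▸ hu)
      · exact hfull0 ω'' h1 h2 h4 h3.2)
  have h4 := rank_mono (hNu.insert hω hz hdu)
    (Finset.insert_subset_insert z (Finset.subset_insert u (N.erase t)))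
  have h5 := step hN0 hω hz hd0
  have hz0 : Q.InCl z (N.erase t) := by
    unfold InCl at hz' ⊢
    omega
  by_cases hxz : z = x
  · exact hxz ▸ hz0
  · exact absurd h (not_inCl_both hN hω hz hx hxz hd
      (hz0.mono hN hω hz hd (Finset.erase_subset _ _)))

/-- The previous removal statement for arbitrary subtransversals, by induction on the number of
classes that are not met. -/
theorem inCl_erase (hQ : Q.Tight) {P ω : Finset α} {e x t : α} (hω : ω ∈ Q.Ω)
    (he : e ∈ ω) (hx : x ∈ ω)
    (hcl : ∀ M, P ⊆ M → Q.Subtr M → Disjoint M ω → ¬ Q.InCl e M) (htP : t ∉ P) (n : ℕ) :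
    ∀ N, (Q.Ω.filter fun ω' => Disjoint N ω').card ≤ n → Q.Subtr N → Disjoint N ω → P ⊆ N →
      t ∈ N → Q.InCl x N → Q.InCl x (N.erase t) := by
  induction n with
  | zero =>
    intro N hn hN hd
    have hmem : ω ∈ Q.Ω.filter fun ω' => Disjoint N ω' := Finset.mem_filter.2 ⟨hω, hd⟩
    exact absurd (Finset.card_pos.2 ⟨ω, hmem⟩) (by omega)
  | succ n ih =>
    intro N hn hN hd hPN ht h
    by_cases hfull : ∀ ω' ∈ Q.Ω, ω' ≠ ω → ¬ Disjoint N ω'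
    · exact inCl_erase_of_full hQ hω he hx hcl hN hd hPN hfull ht htP h
    push Not at hfull
    obtain ⟨ω', hω', hne, hd'⟩ := hfull
    by_contra hc
    have hsub := Finset.erase_subset t N
    obtain ⟨y, hy, hyc⟩ := exists_not_inCl_insert hQ.1 (hN.mono hsub) hω hx
      (hd.mono_left hsub) hω' hne (hd'.mono_left hsub) hc
    have hyN : y ∉ N := fun h => Finset.disjoint_left.1 hd' h hy
    have hNy := hN.insert hω' hy hd'
    have hdy := disjoint_insert_class hω hω' hne hy hd
    have hlt : (Q.Ω.filter fun ω' => Disjoint (insert y N) ω').card <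
        (Q.Ω.filter fun ω' => Disjoint N ω').card := by
      apply Finset.card_lt_card
      rw [Finset.ssubset_iff_of_subset]
      · refine ⟨ω', Finset.mem_filter.2 ⟨hω', hd'⟩, ?_⟩
        simp [hy]
      · intro ω'' h''
        simp only [Finset.mem_filter, Finset.disjoint_insert_left] at h'' ⊢
        tauto
    have := ih (insert y N) (by omega) hNy hdy (hPN.trans (Finset.subset_insert _ _))
      (Finset.mem_insert_of_mem ht) (h.mono hNy hω hx hdy (Finset.subset_insert _ _))
    rw [Finset.erase_insert_of_ne (by rintro rfl; exact hyN ht)] at this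
    exact hyc this

/-- If some `e ∈ ω` lies in the closure of no subtransversal containing `P`, then an `x ∈ ω` in the
closure of a subtransversal containing `P` already lies in the closure of `P`. -/
theorem inCl_of_superset (hQ : Q.Tight) {P ω : Finset α} {e x : α} (hω : ω ∈ Q.Ω)
    (he : e ∈ ω) (hx : x ∈ ω)
    (hcl : ∀ M, P ⊆ M → Q.Subtr M → Disjoint M ω → ¬ Q.InCl e M) {N : Finset α}
    (hN : Q.Subtr N) (hd : Disjoint N ω) (hPN : P ⊆ N) (h : Q.InCl x N) : Q.InCl x P := by
  induction hn : (N \ P).card generalizing N with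
  | zero =>
    have : N ⊆ P := Finset.sdiff_eq_empty_iff_subset.1 (Finset.card_eq_zero.1 hn)
    rwa [hPN.antisymm this]
  | succ n ih =>
    obtain ⟨t, ht⟩ := Finset.card_pos.1 (by omega : 0 < (N \ P).card)
    have ht' := Finset.mem_sdiff.1 ht
    have hsub := Finset.erase_subset t N
    refine ih (hN.mono hsub) (hd.mono_left hsub) (by grind)
      (inCl_erase hQ hω he hx hcl ht'.2 _ N le_rfl hN hd hPN ht'.1 h) ?_
    rw [Finset.erase_sdiff_comm, Finset.card_erase_of_mem ht]
    omega

/-! ### Separators of elementary minors -/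

/-- `X` is a separator of `Q|e`, where `e` belongs to the skew class `ω`.  Compared with
`IsMinorSeparator`, all conditions refer to `Q` itself rather than to the minor. -/
structure Sep (Q : Multimatroid α) (ω : Finset α) (e : α) (X : Finset α) : Prop where
  sub : X ⊆ Q.U
  disj : Disjoint X ω
  classes : ∀ ω' ∈ Q.Ω, ω' ⊆ X ∨ Disjoint ω' X
  rank : ∀ N, Q.Subtr N → Disjoint N ω →
    Q.r (insert e N) + Q.r {e} = Q.r (insert e (N ∩ X)) + Q.r (insert e (N \ X))

theorem mem_minorGround {A : Finset α} {y : α} :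
    y ∈ Q.minorGround A ↔ ∃ ω ∈ Q.Ω, Disjoint ω A ∧ y ∈ ω := by
  simp [minorGround, minorClasses, and_assoc]

theorem minorGround_singleton {ω : Finset α} {e : α} (hω : ω ∈ Q.Ω) (he : e ∈ ω) :
    Q.minorGround {e} = Q.U \ ω := by
  ext y
  simp only [mem_minorGround, Finset.mem_sdiff, Finset.disjoint_singleton_right]
  constructor
  · rintro ⟨ω', h1, h2, h3⟩
    exact ⟨Q.classes_subset _ h1 h3, fun h => h2 (class_unique hω h1 h h3 ▸ he)⟩
  · rintro ⟨h1, h2⟩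
    obtain ⟨ω', h3, h4⟩ := Q.classes_cover y h1
    exact ⟨ω', h3, fun h => h2 (class_unique hω h3 he h ▸ h4), h4⟩

theorem minorSubtr_iff {A S : Finset α} : Q.MinorSubtr A S ↔
    Q.Subtr S ∧ S ⊆ Q.minorGround A := by
  constructor
  · rintro ⟨h1, h2⟩
    refine ⟨⟨fun y hy => ?_, fun ω hω => ?_⟩, h1⟩
    · obtain ⟨ω, h, -, h'⟩ := mem_minorGround.1 (h1 hy)
      exact Q.classes_subset _ h h'
    · by_cases hd : Disjoint ω A
      · exact h2 ω (Finset.mem_filter.2 ⟨hω, hd⟩)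
      · have : S ∩ ω = ∅ := by
          rw [← Finset.disjoint_iff_inter_eq_empty, Finset.disjoint_left]
          intro y hy hyω
          obtain ⟨ω', h, h', h''⟩ := mem_minorGround.1 (h1 hy)
          exact hd (class_unique hω h hyω h'' ▸ h')
        simp [this]
  · rintro ⟨h1, h2⟩
    exact ⟨h2, fun ω hω => h1.2 ω (Finset.mem_filter.1 hω).1⟩

theorem IsMinorSeparator.sep {ω X : Finset α} {e : α} (hω : ω ∈ Q.Ω) (he : e ∈ ω)
    (h : Q.IsMinorSeparator {e} X) : Q.Sep ω e X := by
  obtain ⟨h1, h2, h3⟩ := h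
  have hg := minorGround_singleton hω he
  rw [hg] at h1
  have hdis : Disjoint X ω := Finset.disjoint_of_subset_left h1 Finset.sdiff_disjoint
  refine ⟨h1.trans Finset.sdiff_subset, hdis, fun ω' hω' => ?_, fun N hN hd => ?_⟩
  · by_cases hω'' : e ∈ ω'
    · exact Or.inr (class_unique hω hω' he hω'' ▸ hdis.symm)
    · exact h2 ω' (Finset.mem_filter.2 ⟨hω', by simpa using hω''⟩)
  · have := h3 N (minorSubtr_iff.2 ⟨hN, by
      rw [hg]
      exact Finset.subset_sdiff.2 ⟨hN.1, hd⟩⟩)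
    simpa only [Finset.union_singleton] using this

/-- The complement of a separator of `Q|e` is a separator of `Q|e`. -/
theorem Sep.compl {ω X : Finset α} {e : α} (hω : ω ∈ Q.Ω) (h : Q.Sep ω e X) :
    Q.Sep ω e ((Q.U \ ω) \ X) := by
  have hX := h.classes
  refine ⟨by grind, ?_, fun ω' hω' => ?_, fun N hN hd => ?_⟩
  · rw [Finset.disjoint_left]
    grind
  · by_cases hne : ω' = ω
    · subst hne
      right
      rw [Finset.disjoint_left]
      grind
    · have h1 := Q.classes_subset _ hω'
      have h2 := Q.classes_disjoint _ hω' _ hω hne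
      have h3 := hX ω' hω'
      simp only [Finset.disjoint_left] at *
      grind
  · have h1 : N ∩ ((Q.U \ ω) \ X) = N \ X := by
      have := hN.1
      simp only [Finset.disjoint_left] at *
      grind
    have h2 : N \ ((Q.U \ ω) \ X) = N ∩ X := by
      have := hN.1
      simp only [Finset.disjoint_left] at *
      grind
    rw [h1, h2, h.rank N hN hd, add_comm]

/-- The separator condition for a subtransversal already split along `X`. -/
theorem Sep.rank_union {ω X S T : Finset α} {e : α} (h : Q.Sep ω e X) (hST : Q.Subtr (S ∪ T))
    (hd : Disjoint (S ∪ T) ω) (hS : Disjoint S X) (hT : T ⊆ X) :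
    Q.r (insert e (S ∪ T)) + Q.r {e} = Q.r (insert e S) + Q.r (insert e T) := by
  have h1 : (S ∪ T) ∩ X = T := by
    simp only [Finset.disjoint_left] at *
    grind
  have h2 : (S ∪ T) \ X = S := by
    simp only [Finset.disjoint_left] at *
    grind
  rw [h.rank _ hST hd, h1, h2, add_comm]

/-- If `e` is in the closure of no subtransversal inside a separator `X` of `Q|e`, then `X`
is a separator of `Q`. -/
theorem Sep.isSeparator (hQ : Q.Tight) {ω X : Finset α} {e : α} (hω : ω ∈ Q.Ω) (he : e ∈ ω)
    (h : Q.Sep ω e X) (hcl : ∀ T ⊆ X, Q.Subtr T → ¬ Q.InCl e T) : Q.IsSeparator X := by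
  have hXω := h.disj
  have hT1 : ∀ T ⊆ X, Q.Subtr T → Q.r (insert e T) = Q.r T + 1 := fun T hT hTs =>
    succ_of_not_inCl hTs hω he (hXω.mono_left hT) (hcl T hT hTs)
  have he1 : Q.r {e} = 1 := by
    have := hT1 ∅ (by simp) (subtr_iff.2 (by simp))
    rw [Q.rank_empty] at this
    simpa using this
  have key_e : ∀ S T, Q.Subtr (S ∪ T) → Disjoint (S ∪ T) ω → Disjoint S X → T ⊆ X →
      Q.r (insert e (S ∪ T)) = Q.r (insert e S) + Q.r T := by
    intro S T h1 h2 h3 h4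
    have h5 := h.rank_union h1 h2 h3 h4
    have h6 := hT1 T h4 (h1.mono Finset.subset_union_right)
    omega
  have key : ∀ S T, Q.Subtr (S ∪ T) → Disjoint (S ∪ T) ω → Disjoint S X → T ⊆ X →
      Q.r (S ∪ T) = Q.r S + Q.r T := by
    intro S T h1 h2 h3 h4
    have h5 := key_e S T h1 h2 h3 h4
    have h6 := rank_union_le h1
    have h7 := step h1 hω he h2
    have hS := h1.mono (Finset.subset_union_left (s₂ := T))
    have hSd := h2.mono_left (Finset.subset_union_left (s₂ := T))
    by_cases hc : Q.InCl e S
    · have h8 := hc.mono h1 hω he h2 Finset.subset_union_left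
      unfold InCl at hc h8
      omega
    · have := succ_of_not_inCl hS hω he hSd hc
      omega
  have key_x : ∀ x ∈ ω, ∀ S T, Q.Subtr (S ∪ T) → Disjoint (S ∪ T) ω → Disjoint S X → T ⊆ X →
      Q.InCl x (S ∪ T) → Q.InCl x S := by
    intro x hx S T h1 h2 h3 h4 h5
    by_contra hc
    -- enlarge `S` to meet every class outside `X`, so that closure questions only concern `X`
    obtain ⟨S', a1, a2, a3, a4, a5, a6⟩ := exists_extension hω (fun N => ¬ Q.InCl x N)
      (fun N ω' b1 b2 b3 b4 b5 b6 => exists_not_inCl_insert hQ.1 b1 hω hx b2 b3 b4 b5 b6)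
      (h1.mono Finset.subset_union_left) (h2.mono_left Finset.subset_union_left) hc
      (Q.Ω.filter fun ω' => ω' ≠ ω ∧ Disjoint ω' X) (by simp; tauto)
    have hS'X : Disjoint S' X := by
      rw [Finset.disjoint_left] at h3 ⊢
      intro y hy
      rcases Finset.mem_union.1 (a5 hy) with hy | hy
      · exact h3 hy
      · simp only [Finset.mem_biUnion, Finset.mem_filter, id] at hy
        obtain ⟨ω', ⟨-, -, hω'⟩, hy⟩ := hy
        exact Finset.disjoint_left.1 hω' hy
    have hsub : Q.Subtr (S' ∪ T) :=
      Subtr.union h.classes a2 (h1.mono Finset.subset_union_right) hS'X h4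
    have hd : Disjoint (S' ∪ T) ω :=
      Finset.disjoint_union_left.2 ⟨a3, hXω.mono_left h4⟩
    have hx' : Q.InCl x (S' ∪ T) :=
      h5.mono hsub hω hx hd (Finset.union_subset_union_left a1)
    have heS' : ¬ Q.InCl e S' := by
      intro h'
      have hne : e ≠ x := by rintro rfl; exact a4 h'
      exact not_inCl_both hsub hω he hx hne hd
        (h'.mono hsub hω he hd Finset.subset_union_left) hx'
    refine a4 (inCl_of_superset hQ hω he hx ?_ hsub hd Finset.subset_union_left hx')
    intro M hM1 hM2 hM3
    have hsplit : M = S' ∪ (M ∩ X) := by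
      refine Finset.Subset.antisymm (fun y hy => ?_)
        (Finset.union_subset hM1 Finset.inter_subset_left)
      by_cases hyX : y ∈ X
      · exact Finset.mem_union_right _ (Finset.mem_inter.2 ⟨hy, hyX⟩)
      obtain ⟨ω', hω', hyω'⟩ := Q.classes_cover y (hM2.1 hy)
      have hd' : Disjoint ω' X := by
        rcases h.classes ω' hω' with h' | h'
        · exact absurd (h' hyω') hyX
        · exact h'
      have hne : ω' ≠ ω := by rintro rfl; exact Finset.disjoint_left.1 hM3 hy hyω'
      obtain ⟨z, hz, hzω'⟩ := Finset.not_disjoint_iff.1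
        (a6 ω' (Finset.mem_filter.2 ⟨hω', hne, hd'⟩))
      rw [(subtr_iff.1 hM2).2 ω' hω' y hy z (hM1 hz) hyω' hzω']
      exact Finset.mem_union_left _ hz
    rw [hsplit] at hM2 hM3 ⊢
    have b1 := key_e _ _ hM2 hM3 hS'X Finset.inter_subset_right
    have b2 := key _ _ hM2 hM3 hS'X Finset.inter_subset_right
    unfold InCl at heS' ⊢
    omega
  refine ⟨h.sub, h.classes, fun N hN => ?_⟩
  by_cases hNω : Disjoint N ω
  · have e1 : N \ X ∪ N ∩ X = N := Finset.sdiff_union_inter N X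
    have := key (N \ X) (N ∩ X) (e1.symm ▸ hN) (e1.symm ▸ hNω) Finset.sdiff_disjoint
      Finset.inter_subset_right
    rw [e1] at this
    omega
  · obtain ⟨x, hxN, hx⟩ := Finset.not_disjoint_iff.1 hNω
    set S := (N \ X) \ {x} with hSdef
    set T := N ∩ X with hTdef
    have hxX : x ∉ X := fun h' => Finset.disjoint_left.1 hXω h' hx
    have e1 : insert x (S ∪ T) = N := by grind
    have e2 : insert x S = N \ X := by grind
    have hST : Q.Subtr (S ∪ T) := hN.mono (by grind)
    have hd : Disjoint (S ∪ T) ω := by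
      rw [Finset.disjoint_left]
      intro y hy hyω
      have := (subtr_iff.1 hN).2 ω hω y (by grind) x hxN hyω hx
      grind
    have hSX : Disjoint S X := by
      rw [Finset.disjoint_left]
      grind
    have hTX : T ⊆ X := Finset.inter_subset_right
    have hS := hST.mono (Finset.subset_union_left (s₂ := T))
    have hSd := hd.mono_left (Finset.subset_union_left (s₂ := T))
    have h1 := key S T hST hd hSX hTX
    rw [← e2]
    by_cases hc : Q.InCl x (S ∪ T)
    · have h2 := key_x x hx S T hST hd hSX hTX hc
      unfold InCl at hc h2
      rw [e1] at hc
      omega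
    · have h2 := succ_of_not_inCl hST hω hx hd hc
      have h3 : ¬ Q.InCl x S := fun h' => hc (h'.mono hST hω hx hd Finset.subset_union_left)
      have h4 := succ_of_not_inCl hS hω hx hSd h3
      rw [e1] at h2
      omega

/-- In a connected tight multimatroid, each nonempty separator of `Q|e` spans `e`. -/
theorem Sep.exists_inCl (hQ : Q.Tight) (hC : Q.Connected) {ω X : Finset α} {e : α}
    (hω : ω ∈ Q.Ω) (he : e ∈ ω) (h : Q.Sep ω e X) (hX : X.Nonempty) :
    ∃ T ⊆ X, Q.Subtr T ∧ Q.InCl e T := by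
  by_contra! hc
  refine hC ⟨X, h.isSeparator hQ hω he hc, hX, ?_⟩
  rintro rfl
  exact Finset.disjoint_left.1 h.disj (Q.classes_subset _ hω he) he

/-- If `T` on one side of a separator of `Q|e` spans `e`, then on the other side the minors
`Q|(T + x)`, for `x ≠ e` skew to `e`, and `Q|e` have the same rank function. -/
theorem Sep.rank_swap {ω X S T : Finset α} {e x : α} (hω : ω ∈ Q.Ω) (he : e ∈ ω) (hx : x ∈ ω)
    (hxe : x ≠ e) (h : Q.Sep ω e X) (hST : Q.Subtr (S ∪ T))
    (hd : Disjoint (S ∪ T) ω) (hS : Disjoint S X) (hT : T ⊆ X) (hcl : Q.InCl e T) :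
    Q.r (insert x (S ∪ T)) + Q.r {e} = Q.r (insert e S) + Q.r T + 1 := by
  have h1 := h.rank_union hST hd hS hT
  have h2 := hcl.mono hST hω he hd Finset.subset_union_right
  have h3 := succ_of_not_inCl hST hω hx hd (not_inCl_both hST hω he hx hxe.symm hd h2)
  unfold InCl at hcl h2
  omega

/-- For skew elements `e` and `x`, the intersection of a separator of `Q|x` with a separator of
`Q|e` is again a separator of `Q|e`, provided `e` is spanned by the complementary side. -/
theorem Sep.inter {ω X Z S₀ : Finset α} {e x : α} (hω : ω ∈ Q.Ω) (he : e ∈ ω) (hx : x ∈ ω)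
    (hxe : x ≠ e) (h : Q.Sep ω e X) (hZ : Q.Sep ω x Z) (hS₀ : Q.Subtr S₀)
    (hS₀d : S₀ ⊆ (Q.U \ ω) \ X) (hcl : Q.InCl e S₀) : Q.Sep ω e (Z ∩ X) := by
  have hS₀X : Disjoint S₀ X := Finset.disjoint_of_subset_left hS₀d Finset.sdiff_disjoint
  have hXω := h.disj
  have hS₀ω : Disjoint S₀ ω := by
    rw [Finset.disjoint_left]
    grind
  have swap : ∀ T ⊆ X, Q.Subtr T →
      Q.r (insert x (S₀ ∪ T)) + Q.r {e} = Q.r (insert e T) + Q.r S₀ + 1 := by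
    intro T hT hTs
    have h1 := Subtr.union h.classes hS₀ hTs hS₀X hT
    rw [Finset.union_comm] at h1 ⊢
    refine (h.compl hω).rank_swap hω he hx hxe h1
      (Finset.disjoint_union_left.2 ⟨hXω.mono_left hT, hS₀ω⟩) ?_ hS₀d hcl
    rw [Finset.disjoint_left]
    grind
  have sepZ : ∀ T ⊆ X, Q.Subtr T → Q.r (insert x (S₀ ∪ T)) + Q.r {x} =
      Q.r (insert x ((S₀ ∪ T) ∩ Z)) + Q.r (insert x ((S₀ ∪ T) \ Z)) := by
    intro T hT hTs
    exact hZ.rank _ (Subtr.union h.classes hS₀ hTs hS₀X hT)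
      (Finset.disjoint_union_left.2 ⟨hS₀ω, hXω.mono_left hT⟩)
  refine ⟨Finset.inter_subset_left.trans hZ.sub, hXω.mono_left Finset.inter_subset_right,
    fun ω' hω' => ?_, fun N hN hd => ?_⟩
  · have h1 := h.classes ω' hω'
    have h2 := hZ.classes ω' hω'
    simp only [Finset.disjoint_left] at *
    grind
  set T := N ∩ X with hTdef
  have hTX : T ⊆ X := Finset.inter_subset_right
  have hT : Q.Subtr T := hN.mono Finset.inter_subset_left
  have hTZ : T ∩ Z ⊆ X := Finset.inter_subset_left.trans hTX
  have hTW : T \ Z ⊆ X := Finset.sdiff_subset.trans hTX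
  have hsplit : Q.r (insert e T) + Q.r {e} = Q.r (insert e (T ∩ Z)) + Q.r (insert e (T \ Z)) := by
    have hTZs : Q.Subtr (T ∩ Z) := hT.mono Finset.inter_subset_left
    have hTWs : Q.Subtr (T \ Z) := hT.mono Finset.sdiff_subset
    have hes : Q.Subtr ∅ := hT.mono (Finset.empty_subset _)
    have a1 := swap T hTX hT
    have a2 := swap (T ∩ Z) hTZ hTZs
    have a3 := swap (T \ Z) hTW hTWs
    have a4 := swap ∅ (Finset.empty_subset _) hes
    have b1 := sepZ T hTX hT
    have b2 := sepZ (T ∩ Z) hTZ hTZs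
    have b3 := sepZ (T \ Z) hTW hTWs
    have b4 := sepZ ∅ (Finset.empty_subset _) hes
    rw [show (S₀ ∪ T ∩ Z) ∩ Z = (S₀ ∪ T) ∩ Z by grind,
      show (S₀ ∪ T ∩ Z) \ Z = S₀ \ Z by grind] at b2
    rw [show (S₀ ∪ T \ Z) ∩ Z = S₀ ∩ Z by grind,
      show (S₀ ∪ T \ Z) \ Z = (S₀ ∪ T) \ Z by grind] at b3
    simp only [Finset.union_empty, insert_empty_eq] at a4 b4
    omega
  have c1 := h.rank N hN hd
  rw [← hTdef] at c1
  have c2 := h.rank (N \ (Z ∩ X)) (hN.mono Finset.sdiff_subset)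
    (hd.mono_left Finset.sdiff_subset)
  rw [show (N \ (Z ∩ X)) ∩ X = T \ Z by grind,
    show (N \ (Z ∩ X)) \ X = N \ X by grind] at c2
  rw [show N ∩ (Z ∩ X) = T ∩ Z by grind]
  omega

/-- If `X` is a proper separator of `Q|e` and `Z` a proper separator of `Q|x` with `x ≠ e` skew to
`e`, then `Z` misses `X`: otherwise `Z ∩ X` spans `e` and the complement of `Z` spans `x`, so both
are spanned by one subtransversal. -/
theorem Sep.inter_eq_empty (hQ : Q.Tight) (hC : Q.Connected) {ω X Z : Finset α} {e x : α}
    (hω : ω ∈ Q.Ω) (he : e ∈ ω) (hx : x ∈ ω) (hxe : x ≠ e) (h : Q.Sep ω e X)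
    (hXne : ((Q.U \ ω) \ X).Nonempty) (hZ : Q.Sep ω x Z) (hZne : ((Q.U \ ω) \ Z).Nonempty) :
    ¬ (Z ∩ X).Nonempty := by
  intro hne
  obtain ⟨S₀, h1, h2, h3⟩ := (h.compl hω).exists_inCl hQ hC hω he hXne
  obtain ⟨T, h4, h5, h6⟩ :=
    (h.inter hω he hx hxe hZ h2 h1 h3).exists_inCl hQ hC hω he hne
  obtain ⟨S, h7, h8, h9⟩ := (hZ.compl hω).exists_inCl hQ hC hω hx hZne
  have h10 : T ⊆ Z := h4.trans Finset.inter_subset_left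
  have hSZ : Disjoint S Z := Finset.disjoint_of_subset_left h7 Finset.sdiff_disjoint
  have hST := Subtr.union hZ.classes h8 h5 hSZ h10
  have hSω : Disjoint S ω := by
    rw [Finset.disjoint_left]
    grind
  have hd : Disjoint (S ∪ T) ω :=
    Finset.disjoint_union_left.2 ⟨hSω, hZ.disj.mono_left h10⟩
  exact not_inCl_both hST hω he hx hxe.symm hd
    (h6.mono hST hω he hd Finset.subset_union_right)
    (h9.mono hST hω hx hd Finset.subset_union_left)

/-- If `Q|e` is disconnected, then `Q|x` is connected for each `x ≠ e` skew to `e`. -/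
theorem minorConnected_of_sep (hQ : Q.Tight) (hC : Q.Connected) {ω X : Finset α} {e x : α}
    (hω : ω ∈ Q.Ω) (he : e ∈ ω) (hx : x ∈ ω) (hxe : x ≠ e) (h : Q.Sep ω e X)
    (hX : X.Nonempty) (hXne : ((Q.U \ ω) \ X).Nonempty) : Q.MinorConnected {x} := by
  rintro ⟨Z, hZ, ⟨z, hz⟩, hZp⟩
  have hZg := hZ.1
  rw [minorGround_singleton hω hx] at hZp hZg
  have hZs := hZ.sep hω hx
  have hZne : ((Q.U \ ω) \ Z).Nonempty := by
    rw [Finset.sdiff_nonempty]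
    exact fun h' => hZp (hZg.antisymm h')
  by_cases hzX : z ∈ X
  · exact h.inter_eq_empty hQ hC hω he hx hxe hXne hZs hZne ⟨z, Finset.mem_inter.2 ⟨hz, hzX⟩⟩
  · refine (h.compl hω).inter_eq_empty hQ hC hω he hx hxe ?_ hZs hZne
      ⟨z, Finset.mem_inter.2 ⟨hz, Finset.mem_sdiff.2 ⟨hZg hz, hzX⟩⟩⟩
    obtain ⟨y, hy⟩ := hX
    have h1 := h.sub hy
    have h2 := Finset.disjoint_left.1 h.disj hy
    exact ⟨y, by grind⟩

/-! ### Recovering the minor `Q|A` -/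

/-- If `A` contains `e` and covers a side `X` of a separation of `Q|e`, then replacing `e` by `x`
and `A ∩ X` by a transversal of `X` spanning `e` leaves the minor unchanged. -/
theorem exists_minor_of_cover (hQ : Q.Tight) (hC : Q.Connected) {ω X A : Finset α} {e x : α}
    (hω : ω ∈ Q.Ω) (he : e ∈ ω) (hx : x ∈ ω) (hxe : x ≠ e) (h : Q.Sep ω e X)
    (hX : X.Nonempty) (hA : Q.Subtr A) (heA : e ∈ A)
    (hcov : ∀ ω' ∈ Q.Ω, ω' ⊆ X → ¬ Disjoint ω' A) :
    ∃ B, Q.MinorSubtr {x} B ∧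
      Q.minorClasses (insert x B) = Q.minorClasses A ∧
      ∀ S, Q.MinorSubtr (insert x B) S →
        Q.r (S ∪ insert x B) + Q.r A = Q.r (S ∪ A) + Q.r (insert x B) := by
  have hXω := h.disj
  obtain ⟨T₀, h1, h2, h3⟩ := h.exists_inCl hQ hC hω he hX
  obtain ⟨T, a1, a2, a3, -, a5, a6⟩ := exists_extension hω (fun _ => True)
    (fun N ω' _ _ b3 _ _ _ => (Q.classes_nonempty ω' b3).imp fun y hy => ⟨hy, trivial⟩)
    h2 (hXω.mono_left h1) trivial (Q.Ω.filter fun ω' => ω' ⊆ X) (by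
      intro ω' hω'
      rw [Finset.mem_filter] at hω'
      refine ⟨hω'.1, ?_⟩
      rintro rfl
      exact Finset.disjoint_left.1 hXω (hω'.2 he) he)
  have hTX : T ⊆ X := by
    refine a5.trans (Finset.union_subset h1 (Finset.biUnion_subset.2 fun ω' hω' => ?_))
    exact (Finset.mem_filter.1 hω').2
  have hcl : Q.InCl e T := h3.mono a2 hω he a3 a1
  have hAω : ∀ y ∈ A, y ∈ ω → y = e := fun y hy hyω =>
    (subtr_iff.1 hA).2 ω hω y hy e heA hyω he
  set V := (A \ X).erase e with hV
  have hVA : V ⊆ A := (Finset.erase_subset _ _).trans Finset.sdiff_subset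
  have hVX : Disjoint V X := by
    rw [Finset.disjoint_left]
    grind
  have hVω : Disjoint V ω := by
    rw [Finset.disjoint_left]
    grind
  have hVT : Q.Subtr (V ∪ T) := Subtr.union h.classes (hA.mono hVA) a2 hVX hTX
  have hVTω : Disjoint (V ∪ T) ω := Finset.disjoint_union_left.2 ⟨hVω, a3⟩
  have hclasses : Q.minorClasses (insert x (V ∪ T)) = Q.minorClasses A := by
    unfold minorClasses
    refine Finset.filter_congr fun ω' hω' => ?_
    rw [Finset.disjoint_insert_right, Finset.disjoint_union_right]
    by_cases hne : ω' = ω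
    · subst hne
      exact iff_of_false (fun h' => h'.1 hx) (fun h' => Finset.disjoint_left.1 h' he heA)
    have hxω' : x ∉ ω' := fun h' => hne (class_unique hω' hω h' hx)
    have heω' : e ∉ ω' := fun h' => hne (class_unique hω' hω h' he)
    rcases h.classes ω' hω' with hs | hs
    · refine iff_of_false (fun h' => ?_) (hcov ω' hω' hs)
      exact a6 ω' (Finset.mem_filter.2 ⟨hω', hs⟩) h'.2.2.symm
    · simp only [Finset.disjoint_left] at *
      grind
  refine ⟨V ∪ T, minorSubtr_iff.2 ⟨hVT, ?_⟩, hclasses, fun S hS => ?_⟩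
  · rw [minorGround_singleton hω hx]
    exact Finset.subset_sdiff.2 ⟨hVT.1, hVTω⟩
  have hground : Q.minorGround (insert x (V ∪ T)) = Q.minorGround A := by
    unfold minorGround
    rw [hclasses]
  rw [minorSubtr_iff, hground] at hS
  obtain ⟨hS, hSg⟩ := hS
  have hSA : ∀ y ∈ S, ∃ ω' ∈ Q.Ω, Disjoint ω' A ∧ y ∈ ω' := fun y hy =>
    mem_minorGround.1 (hSg hy)
  have hSX : Disjoint S X := by
    rw [Finset.disjoint_left]
    intro y hy hyX
    obtain ⟨ω', b1, b2, b3⟩ := hSA y hy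
    rcases h.classes ω' b1 with hs | hs
    · exact hcov ω' b1 hs b2
    · exact Finset.disjoint_left.1 hs b3 hyX
  have hSω : Disjoint S ω := by
    rw [Finset.disjoint_left]
    intro y hy hyω
    obtain ⟨ω', b1, b2, b3⟩ := hSA y hy
    exact Finset.disjoint_left.1 b2 (class_unique hω b1 hyω b3 ▸ he) heA
  have hSA' : Q.Subtr (S ∪ A) := by
    rw [subtr_iff]
    refine ⟨Finset.union_subset hS.1 hA.1, fun ω' hω' a ha b hb haω hbω => ?_⟩
    have aux : ∀ a ∈ S, ∀ b ∈ A, a ∈ ω' → b ∉ ω' := by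
      intro a ha b hb haω hbω
      obtain ⟨ω'', b1, b2, b3⟩ := hSA a ha
      exact Finset.disjoint_left.1 b2 (class_unique hω' b1 haω b3 ▸ hbω) hb
    have c1 := (subtr_iff.1 hA).2 ω' hω' a
    have c2 := (subtr_iff.1 hS).2 ω' hω' a
    grind
  have hSVX : Disjoint (S ∪ V) X := Finset.disjoint_union_left.2 ⟨hSX, hVX⟩
  have hSVω : Disjoint (S ∪ V) ω := Finset.disjoint_union_left.2 ⟨hSω, hVω⟩
  have hSV : Q.Subtr (S ∪ V) := hSA'.mono (Finset.union_subset_union_right hVA)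
  have hAX : A ∩ X ⊆ X := Finset.inter_subset_right
  have hAXs : Q.Subtr (A ∩ X) := hA.mono Finset.inter_subset_left
  have d1 := h.rank_swap hω he hx hxe (Subtr.union h.classes hSV a2 hSVX hTX)
    (Finset.disjoint_union_left.2 ⟨hSVω, a3⟩) hSVX hTX hcl
  have d2 := h.rank_swap hω he hx hxe hVT hVTω hVX hTX hcl
  have d3 := h.rank_union (Subtr.union h.classes hSV hAXs hSVX hAX)
    (Finset.disjoint_union_left.2 ⟨hSVω, hXω.mono_left hAX⟩) hSVX hAX
  have d4 := h.rank_union (Subtr.union h.classes (hA.mono hVA) hAXs hVX hAX)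
    (Finset.disjoint_union_left.2 ⟨hVω, hXω.mono_left hAX⟩) hVX hAX
  have heX : e ∉ X := fun h' => Finset.disjoint_left.1 hXω h' he
  rw [show insert e (S ∪ V ∪ A ∩ X) = S ∪ A by grind] at d3
  rw [show insert e (V ∪ A ∩ X) = A by grind] at d4
  rw [show S ∪ insert x (V ∪ T) = insert x (S ∪ V ∪ T) by grind]
  omega

/-- If `Q|A` is connected and `e ∈ A`, then `A` covers one of the two sides of a separation
of `Q|e`. -/
theorem Sep.cover_or {ω X A : Finset α} {e : α} (hω : ω ∈ Q.Ω) (he : e ∈ ω)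
    (h : Q.Sep ω e X) (hA : Q.Subtr A) (heA : e ∈ A) (hconn : Q.MinorConnected A) :
    (∀ ω' ∈ Q.Ω, ω' ⊆ X → ¬ Disjoint ω' A) ∨
      (∀ ω' ∈ Q.Ω, ω' ⊆ (Q.U \ ω) \ X → ¬ Disjoint ω' A) := by
  by_contra! hc
  obtain ⟨⟨ω₁, b1, b2, b3⟩, ⟨ω₂, c1, c2, c3⟩⟩ := hc
  have hXω := h.disj
  refine hconn ⟨X ∩ Q.minorGround A, ⟨Finset.inter_subset_right, fun ω' hω' => ?_,
    fun S hS => ?_⟩, ?_, ?_⟩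
  · rw [minorClasses, Finset.mem_filter] at hω'
    rcases h.classes ω' hω'.1 with hs | hs
    · exact Or.inl fun y hy => Finset.mem_inter.2
        ⟨hs hy, mem_minorGround.2 ⟨ω', hω'.1, hω'.2, hy⟩⟩
    · exact Or.inr (hs.mono_right Finset.inter_subset_left)
  · rw [minorSubtr_iff] at hS
    obtain ⟨hS, hSg⟩ := hS
    have hSA : ∀ y ∈ S, ∃ ω' ∈ Q.Ω, Disjoint ω' A ∧ y ∈ ω' := fun y hy =>
      mem_minorGround.1 (hSg hy)
    have hSA' : Q.Subtr (S ∪ A) := by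
      rw [subtr_iff]
      refine ⟨Finset.union_subset hS.1 hA.1, fun ω' hω' a ha b hb haω hbω => ?_⟩
      have aux : ∀ a ∈ S, ∀ b ∈ A, a ∈ ω' → b ∉ ω' := by
        intro a ha b hb haω hbω
        obtain ⟨ω'', b1, b2, b3⟩ := hSA a ha
        exact Finset.disjoint_left.1 b2 (class_unique hω' b1 haω b3 ▸ hbω) hb
      have c1 := (subtr_iff.1 hA).2 ω' hω' a
      have c2 := (subtr_iff.1 hS).2 ω' hω' a
      grind
    have heX : e ∉ X := fun h' => Finset.disjoint_left.1 hXω h' he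
    have key : ∀ S' ⊆ S, Q.r (S' ∪ A) + Q.r {e} =
        Q.r (insert e ((S' ∪ A.erase e) ∩ X)) + Q.r (insert e ((S' ∪ A.erase e) \ X)) := by
      intro S' hS'
      rw [← h.rank (S' ∪ A.erase e) (hSA'.mono (by grind)) ?_,
        show insert e (S' ∪ A.erase e) = S' ∪ A by grind]
      rw [Finset.disjoint_left]
      intro y hy hyω
      have := (subtr_iff.1 hSA').2 ω hω y (by grind) e (by grind) hyω he
      rcases Finset.mem_union.1 hy with hy | hy
      · obtain ⟨ω', b1, b2, b3⟩ := hSA y (hS' hy)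
        exact Finset.disjoint_left.1 b2 (class_unique hω b1 hyω b3 ▸ he) heA
      · grind
    have k1 := key S subset_rfl
    have k2 := key (S ∩ (X ∩ Q.minorGround A)) Finset.inter_subset_left
    have k3 := key (S \ (X ∩ Q.minorGround A)) Finset.sdiff_subset
    have k4 := key ∅ (Finset.empty_subset _)
    rw [Finset.empty_union, Finset.empty_union] at k4
    rw [show (S ∩ (X ∩ Q.minorGround A) ∪ A.erase e) ∩ X = (S ∪ A.erase e) ∩ X by grind,
      show (S ∩ (X ∩ Q.minorGround A) ∪ A.erase e) \ X = A.erase e \ X by grind] at k2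
    rw [show (S \ (X ∩ Q.minorGround A) ∪ A.erase e) ∩ X = A.erase e ∩ X by grind,
      show (S \ (X ∩ Q.minorGround A) ∪ A.erase e) \ X = (S ∪ A.erase e) \ X by grind] at k3
    omega
  · obtain ⟨y, hy⟩ := Q.classes_nonempty ω₁ b1
    exact ⟨y, Finset.mem_inter.2 ⟨b2 hy, mem_minorGround.2 ⟨ω₁, b1, b3, hy⟩⟩⟩
  · intro heq
    obtain ⟨y, hy⟩ := Q.classes_nonempty ω₂ c1
    have : y ∈ X ∩ Q.minorGround A := by
      rw [heq]
      exact mem_minorGround.2 ⟨ω₂, c1, c3, hy⟩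
    exact (Finset.mem_sdiff.1 (c2 hy)).2 (Finset.mem_inter.1 this).1

end Multimatroid

/-- **Splitter theorem for tight multimatroids.**
Let `Q` be a connected tight multimatroid and `A` a non-empty subtransversal such that the
minor `Q|A` is connected. If `e ∈ A`, then either (i) `Q|e` is connected, or (ii) for every
`x ≠ e` in the skew class of `e`, the minor `Q|x` is connected and has `Q|A` as a minor,
i.e. there is a subtransversal `B` of `Q|x` such that `(Q|x)|B = Q|(B ∪ {x})` equals `Q|A`
(same skew classes and the same rank function, the latter expressed additively). -/
theorem splitter_tight_multimatroid {α : Type*} [DecidableEq α]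
    (Q : Multimatroid α) (hTight : Q.Tight) (hConn : Q.Connected)
    (A : Finset α) (hSub : Q.Subtr A) (hne : A.Nonempty)
    (hAconn : Q.MinorConnected A) (e : α) (he : e ∈ A) :
    Q.MinorConnected {e} ∨
      (∀ ω ∈ Q.Ω, e ∈ ω → ∀ x ∈ ω, x ≠ e →
        Q.MinorConnected {x} ∧
        ∃ B, Q.MinorSubtr {x} B ∧
          Q.minorClasses (insert x B) = Q.minorClasses A ∧
          ∀ S, Q.MinorSubtr (insert x B) S →
            Q.r (S ∪ insert x B) + Q.r A = Q.r (S ∪ A) + Q.r (insert x B)) := by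
  rw [or_iff_not_imp_left]
  intro hdis ω hω heω x hx hxe
  unfold Multimatroid.MinorConnected at hdis
  push Not at hdis
  obtain ⟨X, hX, hXne, hXp⟩ := hdis
  have hXg := hX.1
  rw [Multimatroid.minorGround_singleton hω heω] at hXp hXg
  have hs := hX.sep hω heω
  have hYne : ((Q.U \ ω) \ X).Nonempty := by
    rw [Finset.sdiff_nonempty]
    exact fun h' => hXp (hXg.antisymm h')
  refine ⟨Multimatroid.minorConnected_of_sep hTight hConn hω heω hx hxe hs hXne hYne, ?_⟩
  rcases hs.cover_or hω heω hSub he hAconn with hc | hc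
  · exact Multimatroid.exists_minor_of_cover hTight hConn hω heω hx hxe hs hXne hSub he hc
  · exact Multimatroid.exists_minor_of_cover hTight hConn hω heω hx hxe (hs.compl hω) hYne
      hSub he hc
end
end

section
/- Let D be a connected even delta-matroid with a connected minor D'. If e ∈ E(D) − E(D'), then D∖e or D/e is connected and has D' as a minor. -/
/-!
The proof rests on a parity description of separators: in an even delta-matroid, a set `X` is a
separator if and only if `|F ∩ X|` has the same parity for every feasible set `F`
(`Good.isSeparator_iff`). One direction follows from evenness; for the other, exchanges starting
in `X` must end in `X`, so feasible sets can be recombined along `X` (`combine`).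

A minor on `E \ Z` consists of the feasible sets with a prescribed trace `C` on `Z`
(`MinorOf.exists_trace`, `minorOf_trace`), and `D \ e`, `D / e` are the two sides at `e`: the
feasible sets avoiding `e` and those containing it. Let `D'` be such a minor with `e ∈ Z`. It is a
minor of the side `b` with `b ↔ e ∈ C`, and nothing is left to prove if that side is connected.

Otherwise that side splits into nonempty parts `K` and `L`. Since `D` is connected, neither part
has constant parity on `D`, and so at every feasible set `F₀` of the side there are `k ∈ K` and
`l ∈ L` with `F₀ ∆ {e, k}` and `F₀ ∆ {e, l}` feasible (`Split.exists_right`). The main observation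
(`Split.toggle`) is that `{e, l}` can then be toggled in every set differing from `F₀` inside `K`,
and this preserves feasibility both ways. It has two consequences.

* The connected minor `D'` lies inside `K` or inside `L`, say `K`; toggling `{e, l}` shows that it
  is also the trace of `C ∆ {e, l}`, hence a minor of the other side (`Split.trace_eq`).
* If the other side were split into `X` and `Y` too, one of these, say `X`, misses `k`. By toggling,
  `X` meets every difference of two sets on the first side evenly, which with `k ∉ X` gives `X`
  constant parity on all of `D`, contradicting connectedness (`Split.opposite`).
-/

noncomputable section
open scoped Classical symmDiff

/-- A set system: a finite ground set `E` together with a collection `Fs` of subsets of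
`E`, the feasible sets. -/
structure SetSystem (α : Type*) where
  E : Finset α
  Fs : Set (Finset α)

namespace SetSystem

variable {α : Type*} [DecidableEq α]

/-- A delta-matroid: a set system whose nonempty collection of feasible sets (subsets of
the ground set) satisfies the symmetric exchange axiom. -/
def IsDeltaMatroid (D : SetSystem α) : Prop :=
  D.Fs.Nonempty ∧ (∀ F ∈ D.Fs, F ⊆ D.E) ∧
    ∀ F₁ ∈ D.Fs, ∀ F₂ ∈ D.Fs, ∀ x ∈ F₁ ∆ F₂, ∃ y ∈ F₁ ∆ F₂, F₁ ∆ ({x, y} : Finset α) ∈ D.Fs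

/-- A delta-matroid is even if all its feasible sets have the same parity of size. -/
def IsEven (D : SetSystem α) : Prop :=
  ∀ F₁ ∈ D.Fs, ∀ F₂ ∈ D.Fs, F₁.card % 2 = F₂.card % 2

/-- `e` is a coloop: it belongs to every feasible set. -/
def IsColoop (D : SetSystem α) (e : α) : Prop := ∀ F ∈ D.Fs, e ∈ F

/-- `e` is a loop: it belongs to no feasible set. -/
def IsLoop (D : SetSystem α) (e : α) : Prop := ∀ F ∈ D.Fs, e ∉ F

/-- The underlying deletion operation: keep the feasible sets avoiding `e`. -/
def del₀ (D : SetSystem α) (e : α) : SetSystem α :=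
  ⟨D.E.erase e, {F | F ∈ D.Fs ∧ e ∉ F}⟩

/-- The underlying contraction operation: remove `e` from the feasible sets containing it. -/
def con₀ (D : SetSystem α) (e : α) : SetSystem α :=
  ⟨D.E.erase e, {F | ∃ G ∈ D.Fs, e ∈ G ∧ F = G.erase e}⟩

/-- Deletion `D∖e`: `del₀` if `e` is not a coloop, and `con₀` (= `D/e`) if `e` is a coloop. -/
def delete (D : SetSystem α) (e : α) : SetSystem α :=
  if D.IsColoop e then D.con₀ e else D.del₀ e

/-- Contraction `D/e`: `con₀` if `e` is not a loop, and `del₀` (= `D∖e`) if `e` is a loop. -/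
def contract (D : SetSystem α) (e : α) : SetSystem α :=
  if D.IsLoop e then D.del₀ e else D.con₀ e

/-- The twist `D*A`: replace each feasible set `F` by `F ∆ A`. -/
def twist (D : SetSystem α) (A : Finset α) : SetSystem α :=
  ⟨D.E, {F | ∃ G ∈ D.Fs, F = G ∆ A}⟩

/-- Loop complementation `D+e`. -/
def lcomp (D : SetSystem α) (e : α) : SetSystem α :=
  ⟨D.E, D.Fs ∆ {F | ∃ G ∈ D.Fs, e ∉ G ∧ F = G ∪ {e}}⟩

/-- Loop complementation `D+A` by a set `A = {a₁, …, aₙ}`, defined as the iterated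
single-element loop complementation `D+a₁+⋯+aₙ` (the result is order-independent). -/
def lcompSet (D : SetSystem α) (A : Finset α) : SetSystem α :=
  A.toList.foldl lcomp D

/-- The operation `D ∗̄ A = D+A*A+A`. -/
def starBar (D : SetSystem α) (A : Finset α) : SetSystem α :=
  ((D.lcompSet A).twist A).lcompSet A

/-- The direct sum of two set systems. -/
def directSum (D₁ D₂ : SetSystem α) : SetSystem α :=
  ⟨D₁.E ∪ D₂.E, {F | ∃ F₁ ∈ D₁.Fs, ∃ F₂ ∈ D₂.Fs, F = F₁ ∪ F₂}⟩

/-- `X` is a separator of `D`: `D = D₁ ⊕ D₂` for set systems `D₁`, `D₂` with ground sets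
`X` and `E − X`. -/
def IsSeparator (D : SetSystem α) (X : Finset α) : Prop :=
  X ⊆ D.E ∧ ∃ D₁ D₂ : SetSystem α, D₁.E = X ∧ D₂.E = D.E \ X ∧
    (∀ F ∈ D₁.Fs, F ⊆ D₁.E) ∧ (∀ F ∈ D₂.Fs, F ⊆ D₂.E) ∧ D = D₁.directSum D₂

/-- `D` is connected: it has no proper separator. -/
def Connected (D : SetSystem α) : Prop :=
  ¬ ∃ X, D.IsSeparator X ∧ X.Nonempty ∧ X ≠ D.E

/-- `D'` is a minor of `D`: it is obtained from `D` by a sequence of single-element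
deletions and contractions. -/
inductive MinorOf : SetSystem α → SetSystem α → Prop
  | refl (D : SetSystem α) : MinorOf D D
  | del {D' D : SetSystem α} (e : α) : MinorOf D' D → e ∈ D'.E → MinorOf (D'.delete e) D
  | con {D' D : SetSystem α} (e : α) : MinorOf D' D → e ∈ D'.E → MinorOf (D'.contract e) D

/-- `D'` is a 3-minor of `D`: it is obtained from `D` by a sequence of single-element
deletions, contractions and twist-contractions `D ↦ (D+e)/e`. -/
inductive Minor3Of : SetSystem α → SetSystem α → Prop
  | refl (D : SetSystem α) : Minor3Of D D
  | del {D' D : SetSystem α} (e : α) : Minor3Of D' D → e ∈ D'.E → Minor3Of (D'.delete e) D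
  | con {D' D : SetSystem α} (e : α) : Minor3Of D' D → e ∈ D'.E → Minor3Of (D'.contract e) D
  | tcon {D' D : SetSystem α} (e : α) : Minor3Of D' D → e ∈ D'.E →
      Minor3Of ((D'.lcomp e).contract e) D

/-- `D` is vf-safe: every set system obtained from `D` by a sequence of twists by single
elements and loop complementations is a delta-matroid. -/
inductive TwistLcompReach : SetSystem α → SetSystem α → Prop
  | refl (D : SetSystem α) : TwistLcompReach D D
  | twist {D' D : SetSystem α} (e : α) : TwistLcompReach D' D → e ∈ D'.E →
      TwistLcompReach (D'.twist {e}) D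
  | lcomp {D' D : SetSystem α} (e : α) : TwistLcompReach D' D → e ∈ D'.E →
      TwistLcompReach (D'.lcomp e) D

/-- A vf-safe delta-matroid. -/
def IsVfSafe (D : SetSystem α) : Prop :=
  ∀ D' : SetSystem α, TwistLcompReach D' D → D'.IsDeltaMatroid

end SetSystem

namespace SetSystem

variable {α : Type*} [DecidableEq α]

/-! ### Parity and exchange -/

/-- The parity of `|F ∩ X|`, as an element of `ZMod 2`, so that it is additive in `F` with
respect to symmetric difference. -/
def par (X F : Finset α) : ZMod 2 := ((F ∩ X).card : ZMod 2)

/-- The exchange axiom in the form it takes for an even delta-matroid: the second exchanged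
element is different from the first. -/
def Exch (S : Set (Finset α)) : Prop :=
  ∀ F₁ ∈ S, ∀ F₂ ∈ S, ∀ x ∈ F₁ ∆ F₂, ∃ y ∈ F₁ ∆ F₂, y ≠ x ∧ F₁ ∆ ({x, y} : Finset α) ∈ S

/-- The parity of `|F ∩ X|` is the same for all members `F` of the family `S`. -/
def ConstPar (S : Set (Finset α)) (X : Finset α) : Prop :=
  ∀ F₁ ∈ S, ∀ F₂ ∈ S, par X F₁ = par X F₂

/-- The members of `S` that contain `e` (if `b` holds) or avoid `e` (if `b` fails). -/
def side (S : Set (Finset α)) (e : α) (b : Prop) : Set (Finset α) :=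
  {F | F ∈ S ∧ (e ∈ F ↔ b)}

lemma par_symmDiff (X F G : Finset α) : par X (F ∆ G) = par X F + par X G := by
  have h : ((F ∆ G) ∩ X).card + 2 * (F ∩ G ∩ X).card = (F ∩ X).card + (G ∩ X).card := by
    have h1 : (F ∩ X).card = ((F \ G) ∩ X).card + (F ∩ G ∩ X).card := by
      rw [← Finset.card_union_of_disjoint]
      · congr 1; grind
      · rw [Finset.disjoint_left]; grind
    have h2 : (G ∩ X).card = ((G \ F) ∩ X).card + (F ∩ G ∩ X).card := by
      rw [← Finset.card_union_of_disjoint]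
      · congr 1; grind
      · rw [Finset.disjoint_left]; grind
    have h3 : ((F ∆ G) ∩ X).card = ((F \ G) ∩ X).card + ((G \ F) ∩ X).card := by
      rw [← Finset.card_union_of_disjoint]
      · congr 1; ext z; simp only [Finset.mem_inter, Finset.mem_symmDiff]; grind
      · rw [Finset.disjoint_left]; grind
    omega
  have h' := congrArg (Nat.cast : ℕ → ZMod 2) h
  push_cast at h'
  have h2 : (2 : ZMod 2) = 0 := by decide
  rw [h2, zero_mul, add_zero] at h'
  exact h'

lemma par_pair (X : Finset α) {x y : α} (h : x ≠ y) :
    par X {x, y} = (if x ∈ X then 1 else 0) + (if y ∈ X then 1 else 0) := by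
  unfold par
  by_cases hx : x ∈ X <;> by_cases hy : y ∈ X <;>
    simp [hx, hy, h, Finset.insert_inter_of_mem, Finset.insert_inter_of_notMem] <;> norm_num

lemma par_eq_zero {X A : Finset α} (h : ∀ z ∈ A, z ∉ X) : par X A = 0 := by
  have : A ∩ X = ∅ := by
    ext z; simp; exact h z
  simp [par, this]

lemma par_union {X Y : Finset α} (h : Disjoint X Y) (F : Finset α) :
    par (X ∪ Y) F = par X F + par Y F := by
  unfold par
  rw [Finset.inter_union_distrib_left, Finset.card_union_of_disjoint]
  · push_cast; rfl
  · exact h.mono Finset.inter_subset_right Finset.inter_subset_right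

lemma eq_symmDiff_inter {A K L : Finset α} (hd : Disjoint K L)
    (h : ∀ z ∈ A, z ∈ K ∨ z ∈ L) : A = (A ∩ K) ∆ (A ∩ L) := by
  ext z
  have h1 := h z
  have h2 := fun hz : z ∈ K => Finset.disjoint_left.1 hd hz
  simp only [Finset.mem_symmDiff, Finset.mem_inter]
  tauto

lemma zmod2_cases (a : ZMod 2) : a = 0 ∨ a = 1 := by
  revert a; decide

lemma zmod2_eq_iff (a b : ZMod 2) : a = b ↔ a + b = 0 := by
  revert a b; decide

/-- An exchange that preserves the parity on `X` moves two elements on the same side of `X`. -/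
lemma mem_iff_of_par {X F : Finset α} {x y : α} (hxy : y ≠ x)
    (h : par X (F ∆ {x, y}) = par X F) : x ∈ X ↔ y ∈ X := by
  rw [par_symmDiff, par_pair X hxy.symm] at h
  by_cases hx : x ∈ X <;> by_cases hy : y ∈ X <;> simp [hx, hy] at h ⊢

lemma exch_slice {S : Set (Finset α)} (hS : Exch S) (Z C : Finset α) :
    Exch {F | F ∈ S ∧ F ∩ Z = C} := by
  rintro F₁ ⟨h1, h1'⟩ F₂ ⟨h2, h2'⟩ x hx
  obtain ⟨y, hy, hyx, h⟩ := hS F₁ h1 F₂ h2 x hx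
  refine ⟨y, hy, hyx, h, ?_⟩
  have key : ∀ z ∈ F₁ ∆ F₂, z ∉ Z := by
    intro z hz hzZ
    have : z ∈ F₁ ∩ Z ↔ z ∈ F₂ ∩ Z := by rw [h1', h2']
    simp only [Finset.mem_inter, Finset.mem_symmDiff] at *
    tauto
  have hxZ := key x hx
  have hyZ := key y hy
  rw [← h1']
  ext z
  simp only [Finset.mem_inter, Finset.mem_symmDiff, Finset.mem_insert, Finset.mem_singleton]
  grind

lemma exch_side {S : Set (Finset α)} (hS : Exch S) (e : α) (b : Prop) : Exch (side S e b) := by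
  rintro F₁ ⟨h1, h1'⟩ F₂ ⟨h2, h2'⟩ x hx
  obtain ⟨y, hy, hyx, h⟩ := hS F₁ h1 F₂ h2 x hx
  refine ⟨y, hy, hyx, h, ?_⟩
  simp only [Finset.mem_symmDiff, Finset.mem_insert, Finset.mem_singleton] at *
  grind

/-- If the parity on `X` is constant, feasible sets can be recombined along `X`: moving from
`F₁` towards `F₂`, an exchange that starts in `X` stays in `X`. -/
lemma combine {S : Set (Finset α)} (hS : Exch S) {X : Finset α} (hX : ConstPar S X)
    {F₂ : Finset α} (h2 : F₂ ∈ S) :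
    ∀ (n : ℕ) (F₁ : Finset α), F₁ ∈ S → ((F₁ ∆ F₂) ∩ X).card = n →
      F₁ ∆ ((F₁ ∆ F₂) ∩ X) ∈ S := by
  intro n
  induction n using Nat.strong_induction_on with
  | _ n ih =>
    intro F₁ h1 hn
    rcases Finset.eq_empty_or_nonempty ((F₁ ∆ F₂) ∩ X) with h0 | ⟨x, hx⟩
    · rw [h0, ← Finset.bot_eq_empty, symmDiff_bot]; exact h1
    · rw [Finset.mem_inter] at hx
      obtain ⟨y, hy, hyx, h⟩ := hS F₁ h1 F₂ h2 x hx.1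
      have hyX : y ∈ X := (mem_iff_of_par hyx (hX _ h _ h1)).1 hx.2
      have hss : (((F₁ ∆ {x, y}) ∆ F₂) ∩ X) ⊂ ((F₁ ∆ F₂) ∩ X) := by
        rw [Finset.ssubset_iff_of_subset]
        · refine ⟨x, by simp [hx], ?_⟩
          have := hx.1
          simp only [Finset.mem_inter, Finset.mem_symmDiff, Finset.mem_insert,
            Finset.mem_singleton] at *
          grind
        · intro z
          have := hx.1
          simp only [Finset.mem_inter, Finset.mem_symmDiff, Finset.mem_insert,
            Finset.mem_singleton] at *
          grind
      have := ih _ (hn ▸ Finset.card_lt_card hss) _ h rfl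
      convert this using 1
      ext z
      have := hx.1
      have := hx.2
      simp only [Finset.mem_inter, Finset.mem_symmDiff, Finset.mem_insert,
        Finset.mem_singleton] at *
      grind

/-! ### Splits of one side at an element -/

/-- A separation `(K, L)` of one side of an even delta-matroid `S` at `e`. The disjoint
parts `K` and `L` avoid `e` and together contain every other element of every feasible set. Both
have constant parity on side `b`, while neither has constant parity on the whole of `S`. -/
structure Split (S : Set (Finset α)) (e : α) (b : Prop) (K L : Finset α) : Prop where
  disj : Disjoint K L
  eK : e ∉ K
  eL : e ∉ L
  cover : ∀ F ∈ S, ∀ z ∈ F, z ≠ e → z ∈ K ∨ z ∈ L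
  constK : ConstPar (side S e b) K
  constL : ConstPar (side S e b) L
  notK : ¬ ConstPar S K
  notL : ¬ ConstPar S L

lemma Split.swap {S : Set (Finset α)} {e : α} {b : Prop} {K L : Finset α}
    (h : Split S e b K L) : Split S e b L K :=
  ⟨h.disj.symm, h.eL, h.eK, fun F hF z hz hze => (h.cover F hF z hz hze).symm,
    h.constL, h.constK, h.notL, h.notK⟩

/-- If `L` has constant parity on one side only, then from any set `F₀` of that side some
set on the other side differs in an odd number of elements of `L`. -/
lemma exists_odd {S : Set (Finset α)} {e : α} {b : Prop} {L : Finset α}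
    (hL : ConstPar (side S e b) L) (hn : ¬ ConstPar S L) {F₀ : Finset α}
    (h0 : F₀ ∈ side S e b) : ∃ F ∈ side S e (¬ b), par L (F₀ ∆ F) = 1 := by
  by_contra hcon
  push Not at hcon
  apply hn
  have key : ∀ F ∈ S, par L F₀ = par L F := by
    intro F hF
    by_cases hb : (e ∈ F ↔ b)
    · exact hL _ h0 _ ⟨hF, hb⟩
    · rcases zmod2_cases (par L (F₀ ∆ F)) with h | h
      · rw [par_symmDiff] at h
        exact (zmod2_eq_iff _ _).2 h
      · exact absurd h (hcon F ⟨hF, by tauto⟩)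
  intro F₁ h1 F₂ h2
  rw [← key F₁ h1, key F₂ h2]

/-- If a feasible set `F₂` on the other side differs from `F₀` in an odd number of elements of `L`,
then `{e, l}` can be exchanged at `F₀` for some `l ∈ L`. The induction moves `F₀` towards `F₂`
inside `L`; an exchange found one step closer is brought back to `F₀` by exchanging at `e`. -/
lemma exists_link {S : Set (Finset α)} (hS : Exch S) {e : α} {b : Prop} {L : Finset α}
    (eL : e ∉ L) (hL : ConstPar (side S e b) L) {F₂ : Finset α} (h2 : F₂ ∈ side S e (¬ b)) :
    ∀ (n : ℕ) (F₀ : Finset α), F₀ ∈ side S e b → ((F₀ ∆ F₂) ∩ L).card = n →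
      par L (F₀ ∆ F₂) = 1 → ∃ l ∈ L, F₀ ∆ {e, l} ∈ S := by
  intro n
  induction n using Nat.strong_induction_on with
  | _ n ih =>
    intro F₀ h0 hn hodd
    have hne : ((F₀ ∆ F₂) ∩ L).Nonempty := by
      rw [Finset.nonempty_iff_ne_empty]
      intro h
      simp [par, h] at hodd
    obtain ⟨l, hl⟩ := hne
    rw [Finset.mem_inter] at hl
    obtain ⟨w, hw, hwl, h⟩ := hS F₀ h0.1 F₂ h2.1 l hl.1
    have hle : l ≠ e := fun h => eL (h ▸ hl.2)
    by_cases hwe : w = e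
    · subst hwe
      exact ⟨l, hl.2, by rwa [Finset.pair_comm]⟩
    have h' : F₀ ∆ {l, w} ∈ side S e b := by
      refine ⟨h, ?_⟩
      have := h0.2
      simp only [Finset.mem_symmDiff, Finset.mem_insert, Finset.mem_singleton]
      grind
    have hwL : w ∈ L := (mem_iff_of_par hwl (hL _ h' _ h0)).1 hl.2
    have hss : (((F₀ ∆ {l, w}) ∆ F₂) ∩ L) ⊂ ((F₀ ∆ F₂) ∩ L) := by
      rw [Finset.ssubset_iff_of_subset]
      · refine ⟨l, by simp [hl], ?_⟩
        have := hl.1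
        simp only [Finset.mem_inter, Finset.mem_symmDiff, Finset.mem_insert,
          Finset.mem_singleton] at *
        grind
      · intro z
        have := hl.1
        simp only [Finset.mem_inter, Finset.mem_symmDiff, Finset.mem_insert,
          Finset.mem_singleton] at *
        grind
    have hoddw : par L ((F₀ ∆ {l, w}) ∆ F₂) = 1 := by
      rw [par_symmDiff, hL _ h' _ h0, ← par_symmDiff, hodd]
    obtain ⟨l', hl', h3⟩ := ih _ (hn ▸ Finset.card_lt_card hss) _ h' rfl hoddw
    -- The set just found differs from `F₀` in `e` and elements of `L` only.
    have hl'e : l' ≠ e := fun h => eL (h ▸ hl')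
    have hmem : e ∈ F₀ ∆ ((F₀ ∆ {l, w}) ∆ {e, l'}) := by
      simp only [Finset.mem_symmDiff, Finset.mem_insert, Finset.mem_singleton]
      grind
    obtain ⟨y, hy, hye, h4⟩ := hS F₀ h0.1 _ h3 e hmem
    refine ⟨y, ?_, h4⟩
    simp only [Finset.mem_symmDiff, Finset.mem_insert, Finset.mem_singleton] at hy
    have := hl.2
    grind

/-- In the fundamental graph at any feasible set on the split side, `e` has a neighbour in `L`. -/
lemma Split.exists_right {S : Set (Finset α)} (hS : Exch S) {e : α} {b : Prop} {K L : Finset α}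
    (h : Split S e b K L) {F₀ : Finset α} (h0 : F₀ ∈ side S e b) :
    ∃ l ∈ L, F₀ ∆ {e, l} ∈ S := by
  obtain ⟨F, hF, hodd⟩ := exists_odd h.constL h.notL h0
  exact exists_link hS h.eL h.constL hF _ F₀ h0 rfl hodd

/-- If `{e, l}` with `l ∈ L` can be exchanged at `F₀`, then it can be exchanged at every set that
differs from `F₀` inside `K`, without affecting feasibility in either direction. -/
lemma Split.toggle {S : Set (Finset α)} (hS : Exch S) {e : α} {b : Prop} {K L : Finset α}
    (h : Split S e b K L) {F₀ : Finset α} (h0 : F₀ ∈ side S e b) {l : α} (hl : l ∈ L)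
    (hel : F₀ ∆ {e, l} ∈ S) {F : Finset α} (hF : F₀ ∆ F ⊆ K) : F ∈ S ↔ F ∆ {e, l} ∈ S := by
  have hle : l ≠ e := fun h' => h.eL (h' ▸ hl)
  have hlK : l ∉ K := fun h' => (Finset.disjoint_left.1 h.disj h') hl
  have heF : ¬ e ∈ F₀ ∆ F := fun h' => h.eK (hF h')
  have hlF : ¬ l ∈ F₀ ∆ F := fun h' => hlK (hF h')
  have hb := h0.2
  have hbF : e ∈ F ↔ b := by
    rw [Finset.mem_symmDiff] at heF; tauto
  have hpar : par L F = par L F₀ := by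
    have : par L (F₀ ∆ F) = 0 :=
      par_eq_zero fun z hz => Finset.disjoint_left.1 h.disj (hF hz)
    rw [par_symmDiff] at this
    exact ((zmod2_eq_iff _ _).2 this).symm
  -- Exchanging `l` with an element of `F₀ ∆ F ⊆ K` would break the parity on `L`.
  have bad : ∀ y ∈ F₀ ∆ F, F ∆ {l, y} ∉ S := by
    intro y hy hmem
    have hyK := hF hy
    have hye : y ≠ e := fun h' => h.eK (h' ▸ hyK)
    have hyl : y ≠ l := fun h' => hlK (h' ▸ hyK)
    have hs : F ∆ {l, y} ∈ side S e b := by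
      refine ⟨hmem, ?_⟩
      simp only [Finset.mem_symmDiff, Finset.mem_insert, Finset.mem_singleton]
      grind
    have := (mem_iff_of_par hyl ((h.constL _ hs _ h0).trans hpar.symm)).1 hl
    exact Finset.disjoint_left.1 h.disj hyK this
  constructor
  · intro hFS
    have hmem : l ∈ F ∆ (F₀ ∆ {e, l}) := by
      simp only [Finset.mem_symmDiff, Finset.mem_insert, Finset.mem_singleton] at *
      grind
    obtain ⟨y, hy, hyl, h1⟩ := hS F hFS _ hel l hmem
    by_cases hye : y = e
    · subst hye; rwa [Finset.pair_comm]
    · refine absurd h1 (bad y ?_)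
      simp only [Finset.mem_symmDiff, Finset.mem_insert, Finset.mem_singleton] at *
      grind
  · intro hFS
    have hmem : e ∈ (F ∆ {e, l}) ∆ F₀ := by
      simp only [Finset.mem_symmDiff, Finset.mem_insert, Finset.mem_singleton] at *
      grind
    obtain ⟨y, hy, hye, h1⟩ := hS _ hFS F₀ h0.1 e hmem
    by_cases hyl : y = l
    · subst hyl
      simpa [symmDiff_assoc] using h1
    · have hy' : y ∈ F₀ ∆ F := by
        simp only [Finset.mem_symmDiff, Finset.mem_insert, Finset.mem_singleton] at *
        grind
      refine absurd ?_ (bad y hy')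
      convert h1 using 1
      ext z
      simp only [Finset.mem_symmDiff, Finset.mem_insert, Finset.mem_singleton] at *
      grind

/-- Under a split, a set `X` of constant parity on the other side meets the `K`-part of the
difference of any two sets on the split side evenly: that part can be added to `F₀` and to
`F₀ ∆ {e, l}` alike, and the latter change stays on the other side. -/
lemma Split.par_part {S : Set (Finset α)} (hS : Exch S) {e : α} {b : Prop} {K L : Finset α}
    (h : Split S e b K L) {F₀ : Finset α} (h0 : F₀ ∈ side S e b) {l : α} (hl : l ∈ L)
    (hel : F₀ ∆ {e, l} ∈ S) {X : Finset α} (hX : ConstPar (side S e (¬ b)) X)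
    {G : Finset α} (hG : G ∈ side S e b) : par X ((F₀ ∆ G) ∩ K) = 0 := by
  have h1 := combine (exch_side hS e b) h.constK hG _ F₀ h0 rfl
  have hle : l ≠ e := fun h' => h.eL (h' ▸ hl)
  set A := (F₀ ∆ G) ∩ K with hA
  have hsub : F₀ ∆ (F₀ ∆ A) ⊆ K := by
    rw [symmDiff_symmDiff_cancel_left]; exact Finset.inter_subset_right
  have h2 := (h.toggle hS h0 hl hel hsub).1 h1.1
  have flip : ∀ F ∈ side S e b, F ∆ {e, l} ∈ S → F ∆ {e, l} ∈ side S e (¬ b) := by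
    intro F hF hF'
    refine ⟨hF', ?_⟩
    have := hF.2
    simp only [Finset.mem_symmDiff, Finset.mem_insert, Finset.mem_singleton]
    grind
  have h3 := hX _ (flip _ h1 h2) _ (flip _ h0 hel)
  rw [par_symmDiff, par_symmDiff, par_symmDiff X F₀] at h3
  have h4 := add_right_cancel h3
  simpa using h4

/-- Two disjoint sets `X`, `Y` avoiding `e` cannot both have constant parity on the side opposite
to a split, unless one of them has constant parity everywhere. Indeed `e` has a neighbour `k` in
`K`, and one of the sets misses `k`; that set meets the `K`-part and the `L`-part of every
difference on the split side evenly, so exchanging `{e, k}` extends its constancy to all of `S`. -/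
lemma Split.opposite {S : Set (Finset α)} (hS : Exch S) {e : α} {b : Prop} {K L : Finset α}
    (h : Split S e b K L) {F₀ : Finset α} (h0 : F₀ ∈ side S e b)
    {X Y : Finset α} (hd : Disjoint X Y) (eX : e ∉ X) (eY : e ∉ Y)
    (hX : ConstPar (side S e (¬ b)) X) (hY : ConstPar (side S e (¬ b)) Y)
    (nX : ¬ ConstPar S X) (nY : ¬ ConstPar S Y) : False := by
  obtain ⟨l, hl, hel⟩ := h.exists_right hS h0
  obtain ⟨k, hk, hek⟩ := h.swap.exists_right hS h0
  have hke : k ≠ e := fun h' => h.eK (h' ▸ hk)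
  have hs : F₀ ∆ {e, k} ∈ side S e (¬ b) := by
    refine ⟨hek, ?_⟩
    have := h0.2
    simp only [Finset.mem_symmDiff, Finset.mem_insert, Finset.mem_singleton]
    grind
  have main : ∀ W : Finset α, e ∉ W → k ∉ W → ConstPar (side S e (¬ b)) W →
      ConstPar S W := by
    intro W heW hkW hW
    by_contra hnW
    obtain ⟨G, hG, hodd⟩ := exists_odd hW hnW hs
    have hG' : G ∈ side S e b := ⟨hG.1, by have := hG.2; tauto⟩
    have hA := h.par_part hS h0 hl hel hW hG'
    have hB := h.swap.par_part hS h0 hk hek hW hG'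
    have hsplit : F₀ ∆ G = ((F₀ ∆ G) ∩ K) ∆ ((F₀ ∆ G) ∩ L) := by
      refine eq_symmDiff_inter h.disj fun z hz => ?_
      have hze : z ≠ e := by
        rintro rfl
        have := h0.2
        have := hG'.2
        rw [Finset.mem_symmDiff] at hz
        tauto
      rcases Finset.mem_symmDiff.1 hz with hz | hz
      · exact h.cover F₀ h0.1 z hz.1 hze
      · exact h.cover G hG.1 z hz.1 hze
    have hzero : par W (F₀ ∆ G) = 0 := by
      rw [hsplit, par_symmDiff, hA, hB, add_zero]
    rw [par_symmDiff, par_symmDiff, par_pair W hke.symm] at hodd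
    rw [par_symmDiff] at hzero
    simp only [heW, hkW, if_false, add_zero] at hodd
    rw [hzero] at hodd
    exact absurd hodd (by decide)
  by_cases hkX : k ∈ X
  · exact nY (main Y eY (fun hkY => Finset.disjoint_left.1 hd hkX hkY) hY)
  · exact nX (main X eX hkX hX)


/-! ### Separators of even delta-matroids -/

/-- The even delta-matroid axioms in the form used below: feasible sets lie in the ground set,
exchange holds with distinct elements, and all feasible sets have the same parity. The family
of feasible sets may be empty. -/
structure Good (D : SetSystem α) : Prop where
  sub : ∀ F ∈ D.Fs, F ⊆ D.E
  exch : Exch D.Fs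
  even : ConstPar D.Fs D.E

lemma good_of_even {D : SetSystem α} (hD : D.IsDeltaMatroid) (hEven : D.IsEven) : Good D := by
  have hc : ConstPar D.Fs D.E := by
    intro F₁ h1 F₂ h2
    unfold par
    rw [Finset.inter_eq_left.2 (hD.2.1 _ h1), Finset.inter_eq_left.2 (hD.2.1 _ h2)]
    exact (ZMod.natCast_eq_natCast_iff' _ _ 2).2 (hEven _ h1 _ h2)
  refine ⟨hD.2.1, ?_, hc⟩
  intro F₁ h1 F₂ h2 x hx
  obtain ⟨y, hy, h⟩ := hD.2.2 F₁ h1 F₂ h2 x hx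
  refine ⟨y, hy, ?_, h⟩
  rintro rfl
  have hyE : y ∈ D.E := by
    rcases Finset.mem_symmDiff.1 hx with hx | hx
    · exact hD.2.1 _ h1 hx.1
    · exact hD.2.1 _ h2 hx.1
  have h3 := hc _ h _ h1
  rw [par_symmDiff] at h3
  simp [par, hyE] at h3

/-- In an even delta-matroid, the separators are exactly the sets that all feasible sets meet
in the same parity. -/
lemma Good.isSeparator_iff {D : SetSystem α} (hD : Good D) {X : Finset α} (hX : X ⊆ D.E) :
    D.IsSeparator X ↔ ConstPar D.Fs X := by
  constructor
  · rintro ⟨-, D₁, D₂, hE1, hE2, hs1, hs2, hsum⟩ F₁ h1 F₂ h2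
    have hFs : ∀ F, F ∈ D.Fs ↔ ∃ A ∈ D₁.Fs, ∃ B ∈ D₂.Fs, F = A ∪ B := by
      intro F
      conv_lhs => rw [hsum]
      rfl
    obtain ⟨A, hA, B, hB, rfl⟩ := (hFs F₁).1 h1
    obtain ⟨A', hA', B', hB', rfl⟩ := (hFs F₂).1 h2
    have hmix : A' ∪ B ∈ D.Fs := (hFs _).2 ⟨A', hA', B, hB, rfl⟩
    have hpar := hD.even _ h1 _ hmix
    rw [← Finset.union_sdiff_of_subset hX, par_union Finset.disjoint_sdiff,
      par_union Finset.disjoint_sdiff] at hpar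
    have e1 : par X (A' ∪ B') = par X (A' ∪ B) := by
      unfold par
      congr 2
      have b1 := hs2 B hB
      have b2 := hs2 B' hB'
      rw [hE2] at b1 b2
      ext z
      have := @b1 z
      have := @b2 z
      simp only [Finset.mem_inter, Finset.mem_union, Finset.mem_sdiff] at *
      tauto
    have e2 : par (D.E \ X) (A ∪ B) = par (D.E \ X) (A' ∪ B) := by
      unfold par
      congr 2
      have b1 := hs1 A hA
      have b2 := hs1 A' hA'
      rw [hE1] at b1 b2
      ext z
      have := @b1 z
      have := @b2 z
      simp only [Finset.mem_inter, Finset.mem_union, Finset.mem_sdiff] at *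
      tauto
    rw [e2] at hpar
    rw [e1]
    exact add_right_cancel hpar
  · intro hc
    refine ⟨hX, ⟨X, {A | ∃ F ∈ D.Fs, A = F ∩ X}⟩, ⟨D.E \ X, {A | ∃ F ∈ D.Fs, A = F \ X}⟩,
      rfl, rfl, ?_, ?_, ?_⟩
    · rintro A ⟨F, -, rfl⟩
      exact Finset.inter_subset_right
    · rintro A ⟨F, hF, rfl⟩
      exact Finset.sdiff_subset_sdiff (hD.sub F hF) (Finset.Subset.refl _)
    · have hE : D.E = X ∪ D.E \ X := (Finset.union_sdiff_of_subset hX).symm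
      have hF : D.Fs = {F | ∃ F₁ ∈ {A | ∃ F ∈ D.Fs, A = F ∩ X},
          ∃ F₂ ∈ {A | ∃ F ∈ D.Fs, A = F \ X}, F = F₁ ∪ F₂} := by
        ext F
        constructor
        · intro hF
          refine ⟨F ∩ X, ⟨F, hF, rfl⟩, F \ X, ⟨F, hF, rfl⟩, ?_⟩
          ext z; simp only [Finset.mem_inter, Finset.mem_union, Finset.mem_sdiff]; tauto
        · rintro ⟨_, ⟨G, hG, rfl⟩, _, ⟨H, hH, rfl⟩, rfl⟩
          convert combine hD.exch hc hG _ H hH rfl using 1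
          ext z
          simp only [Finset.mem_inter, Finset.mem_union, Finset.mem_sdiff, Finset.mem_symmDiff]
          tauto
      calc D = ⟨D.E, D.Fs⟩ := rfl
        _ = ⟨X ∪ D.E \ X, {F | ∃ F₁ ∈ {A | ∃ F ∈ D.Fs, A = F ∩ X},
          ∃ F₂ ∈ {A | ∃ F ∈ D.Fs, A = F \ X}, F = F₁ ∪ F₂}⟩ := by rw [← hE, ← hF]

lemma Good.connected_iff {D : SetSystem α} (hD : Good D) :
    D.Connected ↔ ∀ X ⊆ D.E, ConstPar D.Fs X → X = ∅ ∨ X = D.E := by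
  unfold Connected
  constructor
  · intro h X hX hc
    by_contra hcon
    push Not at hcon
    exact h ⟨X, (hD.isSeparator_iff hX).2 hc, hcon.1, hcon.2⟩
  · rintro h ⟨X, hs, hne, hE⟩
    rcases h X hs.1 ((hD.isSeparator_iff hs.1).1 hs) with hX | hX
    · exact hne.ne_empty hX
    · exact hE hX

/-! ### Minors as traces -/

/-- The minor of `D` on `D.E \ Z` coming from the feasible sets whose trace on `Z` is `C`:
the elements of `C` are contracted and those of `Z \ C` deleted. -/
def trace (D : SetSystem α) (Z C : Finset α) : SetSystem α :=
  ⟨D.E \ Z, {F | ∃ G ∈ D.Fs, G ∩ Z = C ∧ F = G \ Z}⟩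

lemma sdiff_inj_of_inter {G H Z : Finset α} (h : G ∩ Z = H ∩ Z) (h' : G \ Z = H \ Z) :
    G = H := by
  rw [← Finset.sdiff_union_inter G Z, h, h', Finset.sdiff_union_inter]

lemma par_sdiff {X Z : Finset α} (h : Disjoint X Z) (G : Finset α) :
    par X (G \ Z) = par X G := by
  unfold par
  congr 2
  ext z
  have := fun hz : z ∈ X => Finset.disjoint_left.1 h hz
  simp only [Finset.mem_inter, Finset.mem_sdiff]
  tauto

lemma constPar_trace {D : SetSystem α} {X Z C : Finset α} (h : Disjoint X Z) :
    ConstPar (D.trace Z C).Fs X ↔ ConstPar {F | F ∈ D.Fs ∧ F ∩ Z = C} X := by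
  constructor
  · intro hc F₁ h1 F₂ h2
    have := hc _ ⟨F₁, h1.1, h1.2, rfl⟩ _ ⟨F₂, h2.1, h2.2, rfl⟩
    rwa [par_sdiff h, par_sdiff h] at this
  · rintro hc _ ⟨F₁, h1, h1', rfl⟩ _ ⟨F₂, h2, h2', rfl⟩
    rw [par_sdiff h, par_sdiff h]
    exact hc F₁ ⟨h1, h1'⟩ F₂ ⟨h2, h2'⟩

lemma Good.trace {D : SetSystem α} (hD : Good D) {Z C : Finset α} (hZ : Z ⊆ D.E) :
    Good (D.trace Z C) := by
  refine ⟨?_, ?_, ?_⟩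
  · rintro _ ⟨G, hG, -, rfl⟩
    exact Finset.sdiff_subset_sdiff (hD.sub G hG) (Finset.Subset.refl _)
  · rintro _ ⟨F₁, h1, h1', rfl⟩ _ ⟨F₂, h2, h2', rfl⟩ x hx
    have hx' : x ∈ F₁ ∆ F₂ ∧ x ∉ Z := by
      simp only [Finset.mem_symmDiff, Finset.mem_sdiff] at *
      tauto
    obtain ⟨y, hy, hyx, h3, h4⟩ :=
      exch_slice hD.exch Z C F₁ ⟨h1, h1'⟩ F₂ ⟨h2, h2'⟩ x hx'.1
    have hyZ : y ∉ Z := by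
      intro hyZ
      have : y ∈ F₁ ∩ Z ↔ y ∈ F₂ ∩ Z := by rw [h1', h2']
      simp only [Finset.mem_inter, Finset.mem_symmDiff] at *
      tauto
    refine ⟨y, ?_, hyx, _, h3, h4, ?_⟩
    · simp only [Finset.mem_symmDiff, Finset.mem_sdiff] at *
      tauto
    · ext z
      have := hx'.2
      simp only [Finset.mem_symmDiff, Finset.mem_sdiff, Finset.mem_insert, Finset.mem_singleton]
      grind
  · change ConstPar _ (D.E \ Z)
    rw [constPar_trace Finset.sdiff_disjoint]
    intro F₁ h1 F₂ h2
    have h := hD.even _ h1.1 _ h2.1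
    rw [← Finset.union_sdiff_of_subset hZ, par_union Finset.disjoint_sdiff,
      par_union Finset.disjoint_sdiff] at h
    have hp : par Z F₁ = par Z F₂ := by
      unfold par; rw [h1.2, h2.2]
    rw [hp] at h
    exact add_left_cancel h

lemma trace_empty {D : SetSystem α} : D.trace ∅ ∅ = D := by
  cases D
  simp [SetSystem.trace]

lemma trace_trace {D : SetSystem α} {Z C Z' C' : Finset α} (hd : Disjoint Z Z')
    (hC : C ⊆ Z) (hC' : C' ⊆ Z') :
    (D.trace Z C).trace Z' C' = D.trace (Z ∪ Z') (C ∪ C') := by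
  have hdz : ∀ z, z ∈ Z → z ∉ Z' := fun z hz => Finset.disjoint_left.1 hd hz
  have hset : {F | ∃ G ∈ (D.trace Z C).Fs, G ∩ Z' = C' ∧ F = G \ Z'} =
      {F | ∃ G ∈ D.Fs, G ∩ (Z ∪ Z') = C ∪ C' ∧ F = G \ (Z ∪ Z')} := by
    ext F
    constructor
    · rintro ⟨_, ⟨G, hG, hGC, rfl⟩, hGC', rfl⟩
      refine ⟨G, hG, ?_, ?_⟩
      · rw [← hGC, ← hGC']
        ext z; have := hdz z
        simp only [Finset.mem_inter, Finset.mem_union, Finset.mem_sdiff]; tauto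
      · ext z
        simp only [Finset.mem_union, Finset.mem_sdiff]; tauto
    · rintro ⟨G, hG, hGC, rfl⟩
      have hz : ∀ z, (z ∈ G ∧ (z ∈ Z ∨ z ∈ Z')) ↔ (z ∈ C ∨ z ∈ C') := by
        intro z
        have := Finset.ext_iff.1 hGC z
        simpa only [Finset.mem_inter, Finset.mem_union] using this
      refine ⟨G \ Z, ⟨G, hG, ?_, rfl⟩, ?_, ?_⟩
      · ext z; have := hdz z; have := hz z; have := @hC z; have := @hC' z
        simp only [Finset.mem_inter]; tauto
      · ext z; have := hdz z; have := hz z; have := @hC z; have := @hC' z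
        simp only [Finset.mem_inter, Finset.mem_sdiff]; tauto
      · ext z
        simp only [Finset.mem_union, Finset.mem_sdiff]; tauto
  have hE : (D.E \ Z) \ Z' = D.E \ (Z ∪ Z') := by
    ext z; simp only [Finset.mem_union, Finset.mem_sdiff]; tauto
  change (⟨(D.E \ Z) \ Z', _⟩ : SetSystem α) = ⟨D.E \ (Z ∪ Z'), _⟩
  rw [hE, hset]

lemma del₀_eq_trace (D : SetSystem α) (e : α) : D.del₀ e = D.trace {e} ∅ := by
  unfold SetSystem.trace del₀
  rw [Finset.sdiff_singleton_eq_erase]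
  congr 1
  ext F
  constructor
  · rintro ⟨hF, he⟩
    refine ⟨F, hF, by simp [he], ?_⟩
    rw [Finset.sdiff_singleton_eq_erase, Finset.erase_eq_of_notMem he]
  · rintro ⟨G, hG, he, rfl⟩
    have he' : e ∉ G := by
      intro h
      have : e ∈ G ∩ {e} := by simp [h]
      simp [he] at this
    rw [Finset.sdiff_singleton_eq_erase, Finset.erase_eq_of_notMem he']
    exact ⟨hG, he'⟩

lemma con₀_eq_trace (D : SetSystem α) (e : α) : D.con₀ e = D.trace {e} {e} := by
  unfold SetSystem.trace con₀
  rw [Finset.sdiff_singleton_eq_erase]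
  congr 1
  ext F
  constructor
  · rintro ⟨G, hG, he, rfl⟩
    exact ⟨G, hG, by simp [he], by rw [Finset.sdiff_singleton_eq_erase]⟩
  · rintro ⟨G, hG, he, rfl⟩
    exact ⟨G, hG, by simpa using he, by rw [Finset.sdiff_singleton_eq_erase]⟩

/-- Deletion and contraction of an element `e` are traces on `{e}`, of nonempty families,
also when `e` is a loop or a coloop. -/
lemma delete_contract_trace (D : SetSystem α) (hne : D.Fs.Nonempty) (e : α) :
    (∃ C ⊆ {e}, D.delete e = D.trace {e} C ∧ (D.trace {e} C).Fs.Nonempty) ∧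
    (∃ C ⊆ {e}, D.contract e = D.trace {e} C ∧ (D.trace {e} C).Fs.Nonempty) := by
  obtain ⟨F, hF⟩ := hne
  constructor
  · unfold delete
    split_ifs with h
    · refine ⟨{e}, Finset.Subset.refl _, con₀_eq_trace D e, ?_⟩
      rw [← con₀_eq_trace]
      exact ⟨_, F, hF, h F hF, rfl⟩
    · refine ⟨∅, Finset.empty_subset _, del₀_eq_trace D e, ?_⟩
      rw [← del₀_eq_trace]
      unfold IsColoop at h
      push Not at h
      obtain ⟨G, hG, hGe⟩ := h
      exact ⟨G, hG, hGe⟩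
  · unfold contract
    split_ifs with h
    · refine ⟨∅, Finset.empty_subset _, del₀_eq_trace D e, ?_⟩
      rw [← del₀_eq_trace]
      exact ⟨F, hF, h F hF⟩
    · refine ⟨{e}, Finset.Subset.refl _, con₀_eq_trace D e, ?_⟩
      rw [← con₀_eq_trace]
      unfold IsLoop at h
      push Not at h
      obtain ⟨G, hG, hGe⟩ := h
      exact ⟨_, G, hG, hGe, rfl⟩

lemma delete_or_contract_eq {D : SetSystem α} {e : α} {C : Finset α} (hC : C ⊆ {e})
    (hne : (D.trace {e} C).Fs.Nonempty) :
    D.delete e = D.trace {e} C ∨ D.contract e = D.trace {e} C := by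
  obtain ⟨_, G, hG, hGC, -⟩ := hne
  rcases Finset.subset_singleton_iff.1 hC with rfl | rfl
  · left
    have : ¬ D.IsColoop e := fun h => by
      have : e ∈ G ∩ {e} := by simp [h G hG]
      simp [hGC] at this
    rw [delete, if_neg this, del₀_eq_trace]
  · right
    have : ¬ D.IsLoop e := fun h => by
      have : e ∈ G ∩ {e} := by simp [hGC]
      exact h G hG (Finset.mem_inter.1 this).1
    rw [contract, if_neg this, con₀_eq_trace]

lemma MinorOf.exists_trace {D' D : SetSystem α} (h : MinorOf D' D) (hne : D.Fs.Nonempty) :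
    D'.Fs.Nonempty ∧ ∃ Z ⊆ D.E, ∃ C ⊆ Z, D' = D.trace Z C := by
  have step : ∀ (D D' : SetSystem α) (e : α) (C : Finset α), e ∈ D'.E → C ⊆ {e} →
      (∃ Z ⊆ D.E, ∃ C ⊆ Z, D' = D.trace Z C) →
      ∃ Z ⊆ D.E, ∃ C' ⊆ Z, D'.trace {e} C = D.trace Z C' := by
    rintro D _ e C he hC ⟨Z, hZ, C₁, hC₁, rfl⟩
    have he' : e ∈ D.E ∧ e ∉ Z := Finset.mem_sdiff.1 he
    refine ⟨Z ∪ {e}, Finset.union_subset hZ (by simpa using he'.1), C₁ ∪ C,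
      Finset.union_subset_union hC₁ hC, ?_⟩
    exact trace_trace (by simpa using he'.2) hC₁ hC
  induction h with
  | refl D => exact ⟨hne, ∅, Finset.empty_subset _, ∅, Finset.Subset.refl _, trace_empty.symm⟩
  | del e _ he ih =>
    obtain ⟨h1, h2⟩ := ih hne
    obtain ⟨⟨C, hC, hCe, hn⟩, -⟩ := delete_contract_trace _ h1 e
    rw [hCe]
    exact ⟨hn, step _ _ e C he hC h2⟩
  | con e _ he ih =>
    obtain ⟨h1, h2⟩ := ih hne
    obtain ⟨-, ⟨C, hC, hCe, hn⟩⟩ := delete_contract_trace _ h1 e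
    rw [hCe]
    exact ⟨hn, step _ _ e C he hC h2⟩

lemma minorOf_trace {D : SetSystem α} : ∀ (Z C : Finset α), Z ⊆ D.E → C ⊆ Z →
    (D.trace Z C).Fs.Nonempty → MinorOf (D.trace Z C) D := by
  intro Z
  induction Z using Finset.induction_on with
  | empty =>
    intro C _ hC _
    rw [Finset.subset_empty.1 hC, trace_empty]
    exact .refl D
  | insert e Z heZ ih =>
    intro C hZ hC hne
    have hdec : D.trace (insert e Z) C = (D.trace Z (C ∩ Z)).trace {e} (C ∩ {e}) := by
      rw [trace_trace (by simpa using heZ) Finset.inter_subset_right Finset.inter_subset_right]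
      congr 1
      · ext z; simp
      · ext z; have := @hC z
        simp only [Finset.mem_insert, Finset.mem_union, Finset.mem_inter,
          Finset.mem_singleton] at *
        tauto
    rw [hdec] at hne ⊢
    have hne' : (D.trace Z (C ∩ Z)).Fs.Nonempty := by
      obtain ⟨_, G, hG, -⟩ := hne
      exact ⟨G, hG⟩
    have hm := ih (C ∩ Z) ((Finset.subset_insert _ _).trans hZ) Finset.inter_subset_right hne'
    have he : e ∈ (D.trace Z (C ∩ Z)).E :=
      Finset.mem_sdiff.2 ⟨hZ (Finset.mem_insert_self _ _), heZ⟩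
    rcases delete_or_contract_eq Finset.inter_subset_right hne with h | h
    · rw [← h]; exact .del e hm he
    · rw [← h]; exact .con e hm he

/-! ### Transferring minors and connectivity to the other side -/

/-- When `Z` contains `L`, so that the minor lives inside `K`, toggling `{e, l}` in the contracted
set gives the same minor from the other side of `e`. -/
lemma Split.trace_eq {D : SetSystem α} (hD : Good D) {e : α} {b : Prop} {K L : Finset α}
    (h : Split D.Fs e b K L) {Z : Finset α} (he : e ∈ Z) {F₀ : Finset α}
    (h0 : F₀ ∈ side D.Fs e b) (hLZ : L ⊆ Z) :
    ∃ C' ⊆ Z, (e ∈ C' ↔ ¬ b) ∧ D.trace Z (F₀ ∩ Z) = D.trace Z C' := by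
  obtain ⟨l, hl, hel⟩ := h.exists_right hD.exch h0
  have hle : l ≠ e := fun h' => h.eL (h' ▸ hl)
  have hlZ := hLZ hl
  have hK : ∀ F ∈ D.Fs, (∀ z ∈ Z, z ∈ F₀ ↔ z ∈ F) → F₀ ∆ F ⊆ K := by
    intro F hF hZ z hz
    have hzZ : z ∉ Z := by
      intro h'
      have := hZ z h'
      rw [Finset.mem_symmDiff] at hz
      tauto
    have hze : z ≠ e := fun h' => hzZ (h' ▸ he)
    have hzL : z ∉ L := fun h' => hzZ (hLZ h')
    rcases Finset.mem_symmDiff.1 hz with hz | hz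
    · exact (h.cover F₀ h0.1 z hz.1 hze).resolve_right hzL
    · exact (h.cover F hF z hz.1 hze).resolve_right hzL
  have hsd : ∀ F : Finset α, (F ∆ {e, l}) \ Z = F \ Z := by
    intro F
    ext z
    simp only [Finset.mem_symmDiff, Finset.mem_sdiff, Finset.mem_insert, Finset.mem_singleton]
    grind
  have hin : ∀ F : Finset α, (F ∆ {e, l}) ∩ Z = (F ∩ Z) ∆ {e, l} := by
    intro F
    ext z
    simp only [Finset.mem_symmDiff, Finset.mem_inter, Finset.mem_insert, Finset.mem_singleton]
    grind
  refine ⟨(F₀ ∩ Z) ∆ {e, l}, ?_, ?_, ?_⟩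
  · rw [← hin]; exact Finset.inter_subset_right
  · have := h0.2
    simp only [Finset.mem_symmDiff, Finset.mem_inter, Finset.mem_insert, Finset.mem_singleton]
    tauto
  · unfold SetSystem.trace
    congr 1
    ext F
    constructor
    · rintro ⟨G, hG, hGZ, rfl⟩
      refine ⟨G ∆ {e, l}, ?_, by rw [hin, hGZ], (hsd G).symm⟩
      refine (h.toggle hD.exch h0 hl hel (hK G hG fun z hz => ?_)).1 hG
      have := Finset.ext_iff.1 hGZ z
      simp only [Finset.mem_inter] at this
      tauto
    · rintro ⟨G, hG, hGZ, rfl⟩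
      have hGZ' : (G ∆ {e, l}) ∩ Z = F₀ ∩ Z := by
        rw [hin, hGZ, symmDiff_symmDiff_cancel_right]
      refine ⟨G ∆ {e, l}, ?_, hGZ', (hsd G).symm⟩
      have hsub : F₀ ∆ (G ∆ {e, l}) ⊆ K := by
        intro z hz
        have hzZ : z ∉ Z := by
          intro h'
          have := Finset.ext_iff.1 hGZ' z
          rw [Finset.mem_symmDiff] at hz
          simp only [Finset.mem_inter] at this
          tauto
        have hze : z ≠ e := fun h' => hzZ (h' ▸ he)
        have hzl : z ≠ l := fun h' => hzZ (h' ▸ hlZ)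
        have hzL : z ∉ L := fun h' => hzZ (hLZ h')
        have hz' : z ∈ F₀ ∨ z ∈ G := by
          simp only [Finset.mem_symmDiff, Finset.mem_insert, Finset.mem_singleton] at hz
          tauto
        rcases hz' with hz' | hz'
        · exact (h.cover F₀ h0.1 z hz' hze).resolve_right hzL
        · exact (h.cover G hG z hz' hze).resolve_right hzL
      refine (h.toggle hD.exch h0 hl hel hsub).2 ?_
      rwa [symmDiff_symmDiff_cancel_right]

/-- The trace set on `{e}` describing the side `b`. -/
def sideSet (e : α) (b : Prop) : Finset α := if b then {e} else ∅

lemma inter_singleton_eq_sideSet {e : α} {b : Prop} {F : Finset α} :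
    F ∩ {e} = sideSet e b ↔ (e ∈ F ↔ b) := by
  unfold sideSet
  by_cases hb : b <;> by_cases he : e ∈ F <;> simp [hb, he]

lemma sideSet_subset (e : α) (b : Prop) : sideSet e b ⊆ {e} := by
  unfold sideSet
  split_ifs <;> simp

lemma constPar_trace_side {D : SetSystem α} {e : α} {b : Prop} {X : Finset α} (h : e ∉ X) :
    ConstPar (D.trace {e} (sideSet e b)).Fs X ↔ ConstPar (side D.Fs e b) X := by
  rw [constPar_trace (by simpa using h)]
  simp only [inter_singleton_eq_sideSet]
  rfl

lemma Good.constPar_compl {D : SetSystem α} (hD : Good D) {e : α} {b : Prop} (he : e ∈ D.E)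
    {X : Finset α} (hX : X ⊆ D.E \ {e}) (hc : ConstPar (side D.Fs e b) X) :
    ConstPar (side D.Fs e b) ((D.E \ {e}) \ X) := by
  have heX : e ∉ X := fun h => by simpa using hX h
  have hg := (hD.trace (Z := {e}) (C := sideSet e b) (by simpa using he)).even
  have hg' : ConstPar (side D.Fs e b) (D.E \ {e}) :=
    (constPar_trace_side (by simp)).1 hg
  intro F₁ h1 F₂ h2
  have h3 := hg' _ h1 _ h2
  rw [← Finset.union_sdiff_of_subset hX, par_union Finset.disjoint_sdiff,
    par_union Finset.disjoint_sdiff, hc _ h1 _ h2] at h3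
  exact add_left_cancel h3

/-- Disconnectedness of one side of a connected even delta-matroid at `e` yields a split. -/
lemma Good.exists_split {D : SetSystem α} (hD : Good D) (hConn : D.Connected) {e : α} {b : Prop}
    (he : e ∈ D.E) (h : ¬ (D.trace {e} (sideSet e b)).Connected) :
    ∃ K L, K ∪ L = D.E \ {e} ∧ Split D.Fs e b K L := by
  rw [(hD.trace (by simpa using he)).connected_iff] at h
  push Not at h
  obtain ⟨X, hX, hc, hne, hE⟩ := h
  change X ⊆ D.E \ {e} at hX
  change X ≠ D.E \ {e} at hE
  have heX : e ∉ X := fun h => by simpa using hX h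
  rw [constPar_trace_side heX] at hc
  have hno : ∀ W ⊆ D.E \ {e}, W.Nonempty → ¬ ConstPar D.Fs W := by
    intro W hW hWne hcW
    rcases hD.connected_iff.1 hConn W (hW.trans Finset.sdiff_subset) hcW with h | h
    · exact hWne.ne_empty h
    · rw [h] at hW
      simpa using hW he
  refine ⟨X, (D.E \ {e}) \ X, Finset.union_sdiff_of_subset hX, Finset.disjoint_sdiff, heX,
    by simp, ?_, hc, hD.constPar_compl he hX hc, hno X hX hne, hno _ Finset.sdiff_subset ?_⟩
  · intro F hF z hz hze
    have := hD.sub F hF hz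
    simp only [Finset.mem_sdiff, Finset.mem_singleton]
    tauto
  · rw [Finset.sdiff_nonempty]
    exact fun h => hE (Finset.Subset.antisymm hX h)

/-- The side opposite to a disconnected one is connected. -/
lemma Good.connected_other {D : SetSystem α} (hD : Good D) (hConn : D.Connected) {e : α}
    {b : Prop} (he : e ∈ D.E) {K L : Finset α} (h : Split D.Fs e b K L) {F₀ : Finset α}
    (h0 : F₀ ∈ side D.Fs e b) : (D.trace {e} (sideSet e (¬ b))).Connected := by
  by_contra hcon
  obtain ⟨X, Y, -, hs⟩ := hD.exists_split hConn he hcon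
  exact h.opposite hD.exch h0 hs.disj hs.eK hs.eL hs.constK hs.constL hs.notK hs.notL

/-- Every connected minor avoiding `e` is a trace from a connected side of `D` at `e`: the side
containing it to begin with or, failing that, the other one. -/
lemma Good.exists_side {D : SetSystem α} (hD : Good D) (hConn : D.Connected) {Z C : Finset α}
    (hZ : Z ⊆ D.E) (hC : C ⊆ Z) (hne : (D.trace Z C).Fs.Nonempty)
    (hConn' : (D.trace Z C).Connected) {e : α} (heZ : e ∈ Z) :
    ∃ b : Prop, (D.trace {e} (sideSet e b)).Connected ∧
      ∃ C' ⊆ Z, (e ∈ C' ↔ b) ∧ D.trace Z C = D.trace Z C' := by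
  have he := hZ heZ
  by_cases hT : (D.trace {e} (sideSet e (e ∈ C))).Connected
  · exact ⟨_, hT, C, hC, Iff.rfl, rfl⟩
  obtain ⟨K, L, hKL, hs⟩ := hD.exists_split hConn he hT
  obtain ⟨_, F₀, hF₀, rfl, -⟩ := hne
  have h0 : F₀ ∈ side D.Fs e (e ∈ F₀ ∩ Z) := ⟨hF₀, by simp [heZ]⟩
  refine ⟨¬ e ∈ F₀ ∩ Z, hD.connected_other hConn he hs h0, ?_⟩
  -- `K` has constant parity on the minor, so the minor lies inside `K` or inside `L`.
  have hc : ConstPar (D.trace Z (F₀ ∩ Z)).Fs (K \ Z) := by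
    rw [constPar_trace Finset.sdiff_disjoint]
    have hside : ∀ F ∈ D.Fs, F ∩ Z = F₀ ∩ Z → F ∈ side D.Fs e (e ∈ F₀ ∩ Z) := by
      intro F hF hFZ
      refine ⟨hF, ?_⟩
      rw [← hFZ]
      simp [heZ]
    have hdec : ∀ F : Finset α, par K F = par (K \ Z) F + par K (F ∩ Z) := by
      intro F
      have h1 : K = (K \ Z) ∪ (K ∩ Z) := (Finset.sdiff_union_inter K Z).symm
      have h2 : par (K ∩ Z) F = par K (F ∩ Z) := by
        unfold par; congr 2; ext z; simp only [Finset.mem_inter]; tauto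
      conv_lhs => rw [h1, par_union (Finset.disjoint_sdiff_inter K Z), h2]
    rintro F₁ ⟨h1, h1'⟩ F₂ ⟨h2, h2'⟩
    have h3 := hs.constK _ (hside F₁ h1 h1') _ (hside F₂ h2 h2')
    rw [hdec F₁, hdec F₂, h1', h2'] at h3
    exact add_right_cancel h3
  have hsubKL : ∀ z ∈ D.E, z ≠ e → z ∈ K ∨ z ∈ L := by
    intro z hz hze
    rw [← Finset.mem_union, hKL]
    simp [hz, hze]
  have hKE : K ⊆ D.E := fun z hz =>
    (Finset.mem_sdiff.1 (hKL ▸ Finset.mem_union_left L hz)).1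
  have hLE : L ⊆ D.E := fun z hz =>
    (Finset.mem_sdiff.1 (hKL ▸ Finset.mem_union_right K hz)).1
  rcases (hD.trace hZ).connected_iff.1 hConn' (K \ Z)
    (Finset.sdiff_subset_sdiff hKE (Finset.Subset.refl _)) hc with h | h
  · exact hs.swap.trace_eq hD heZ h0 (Finset.sdiff_eq_empty_iff_subset.1 h)
  · refine hs.trace_eq hD heZ h0 fun z hz => ?_
    by_contra hzZ
    have hzK : z ∈ K \ Z := by
      rw [h]; exact Finset.mem_sdiff.2 ⟨hLE hz, hzZ⟩
    exact Finset.disjoint_left.1 hs.disj (Finset.mem_sdiff.1 hzK).1 hz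

end SetSystem

open SetSystem in
/-- **Splitter theorem for even delta-matroids.** Let `D` be a connected even delta-matroid
with a connected minor `D'`. If `e ∈ E(D) − E(D')`, then `D∖e` or `D/e` is connected and
has `D'` as a minor. -/
theorem splitter_even_delta_matroid {α : Type*} [DecidableEq α]
    (D D' : SetSystem α) (hD : D.IsDeltaMatroid) (hEven : D.IsEven)
    (hConn : D.Connected) (hMinor : MinorOf D' D) (hConn' : D'.Connected)
    (e : α) (heD : e ∈ D.E) (heD' : e ∉ D'.E) :
    ((D.delete e).Connected ∧ MinorOf D' (D.delete e)) ∨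
      ((D.contract e).Connected ∧ MinorOf D' (D.contract e)) := by
  have hG := good_of_even hD hEven
  obtain ⟨hne', Z, hZ, C, hC, rfl⟩ := hMinor.exists_trace hD.1
  have heZ : e ∈ Z := by
    by_contra h
    exact heD' (Finset.mem_sdiff.2 ⟨heD, h⟩)
  obtain ⟨b, hb, C', hC', heC', heq⟩ := hG.exists_side hConn hZ hC hne' hConn' heZ
  -- Split off `e` first: the minor is a trace of the connected side.
  have hsplit : D.trace Z C' = (D.trace {e} (sideSet e b)).trace (Z \ {e}) (C' \ {e}) := by
    rw [trace_trace Finset.disjoint_sdiff (sideSet_subset e b)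
      (Finset.sdiff_subset_sdiff hC' (Finset.Subset.refl _)),
      ← inter_singleton_eq_sideSet.2 heC',
      Finset.union_sdiff_of_subset (Finset.singleton_subset_iff.2 heZ), Finset.union_comm,
      Finset.sdiff_union_inter]
  rw [heq, hsplit] at hne'
  have hm := minorOf_trace (D := D.trace {e} (sideSet e b)) (Z \ {e}) (C' \ {e})
    (Finset.sdiff_subset_sdiff hZ (Finset.Subset.refl _))
    (Finset.sdiff_subset_sdiff hC' (Finset.Subset.refl _)) hne'
  have hTne : (D.trace {e} (sideSet e b)).Fs.Nonempty := by
    obtain ⟨_, G, hG', -⟩ := hne'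
    exact ⟨G, hG'⟩
  rw [heq, hsplit]
  rcases delete_or_contract_eq (sideSet_subset e b) hTne with h | h
  · left; rw [h]; exact ⟨hb, hm⟩
  · right; rw [h]; exact ⟨hb, hm⟩
end
end

section
/- Let D be a connected vf-safe delta-matroid. If e ∈ E(D), then at least two of the three delta-matroids D∖e, D/e and D+e/e are connected. -/
/-!
A set system is treated as a function `f` from sets to `ZMod 2`. Twists and loop
complementations at `v` are then changes of basis in the tensor factor belonging to `v`, and a
separator is a factorization of `f` as a product. Hence both operations preserve separators.
Splitting at `e`, the sets avoiding `e` and the sets containing `e` give functions `a` and `b`;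
the three minors at `e` are `a`, `b` and `a + b`, and twists and loop complementations at `e`
permute them arbitrarily (`join_tw_self`, `join_lc_self`). If one of them is zero, then `{e}` is
a separator (`sep_singleton`).

*Fundamental graph.* Let `f ∅ = 1` and call `u, v` adjacent when `f {u, v} ≠ f {u} * f {v}`. If no
edge joins `A` to its complement, then `A` is a separator (`factor`, `Cross.sep`). Indeed,
loop complementations make all singletons infeasible. If `f F` differs from
`f (F ∩ A) * f (F \ A)`, symmetric exchange provides feasible pairs `G ⊆ F ∩ A` and
`H ⊆ F \ A`. Twisting by `G` or by `H` creates no crossing edge (`cross_tws`), and `G ∪ H` is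
feasible (`edge_edge`), so induction on the size of `F` applies.

*Two disconnected minors.* Let `p` and `q` be two of the minors at `e`, with proper separators
`X` and `Y`. Exchange and a loop complementation produce a set feasible in both, which a twist
moves to `∅` (`no_two`). So let `e` be placed such that `f` restricts to `p` away from `e` and
`p + q` is the part containing `e`, with no feasible singleton. If `u ∈ X ∩ Y` and
`v ∉ X ∪ Y`, then `p {u, v} = 0`, and since all pairs in a feasible triple are feasible
(`triple`), also `q {u, v} = 0`. As `Y` separates `q`, the element `e` is nonadjacent to `u` or
to `v`. So `e` has no neighbour in `X ∩ Y`, or none in `Xᶜ ∩ Yᶜ`; that set is not joined to its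
complement by any edge (`sep_inter`), hence is a separator, hence empty by connectedness. The same
holds with `Yᶜ` in place of `Y`, and together these force `X` or `Y` to be trivial.
-/

noncomputable section
open scoped Classical symmDiff

namespace ChainVfSafe

open SetSystem

variable {α : Type*} [DecidableEq α]

/-! ### Set systems as functions with values in `ZMod 2` -/

/-- The set system on `E` whose feasible sets are those where `f` takes the value `1`. -/
def toSys (E : Finset α) (f : Finset α → ZMod 2) : SetSystem α := ⟨E, {F | f F = 1}⟩

/-- The twist by `v` of an indicator function. -/
def tw (v : α) (f : Finset α → ZMod 2) : Finset α → ZMod 2 := fun F => f (F ∆ {v})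

/-- The twist by the set `A` of an indicator function. -/
def tws (A : Finset α) (f : Finset α → ZMod 2) : Finset α → ZMod 2 := fun F => f (F ∆ A)

/-- Loop complementation at `v` of an indicator function. -/
def lc (v : α) (f : Finset α → ZMod 2) : Finset α → ZMod 2 :=
  fun F => if v ∈ F then f F + f (F.erase v) else f F

/-- The indicator function of a vf-safe delta-matroid on `E`. -/
def VF (E : Finset α) (f : Finset α → ZMod 2) : Prop := (toSys E f).IsVfSafe

/-- `f` factors over `A` and its complement; on indicator functions this says that `A` is a
separator. -/
def Sep (E : Finset α) (f : Finset α → ZMod 2) (A : Finset α) : Prop :=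
  A ⊆ E ∧ ∃ g h : Finset α → ZMod 2, ∀ F ⊆ E, f F = g (F ∩ A) * h (F \ A)

/-- `f` has no proper separator. -/
def Conn (E : Finset α) (f : Finset α → ZMod 2) : Prop :=
  ∀ A, Sep E f A → A = ∅ ∨ A = E

/-- The function which is `p` on the sets avoiding `e` and `q` (after removal of `e`) on the
sets containing `e`. -/
def join (e : α) (p q : Finset α → ZMod 2) : Finset α → ZMod 2 :=
  fun F => if e ∈ F then q (F.erase e) else p F

lemma zcases (x : ZMod 2) : x = 0 ∨ x = 1 := by revert x; decide

lemma zne (x : ZMod 2) (h : x ≠ 1) : x = 0 := (zcases x).resolve_right h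

lemma zadd (x : ZMod 2) : x + x = 0 := by revert x; decide

lemma sd_empty (F : Finset α) : F ∆ ∅ = F := symmDiff_bot F

lemma empty_sd (F : Finset α) : ∅ ∆ F = F := bot_symmDiff F

lemma toSys_twist (E : Finset α) (f : Finset α → ZMod 2) (v : α) :
    (toSys E f).twist {v} = toSys E (tw v f) := by
  unfold toSys SetSystem.twist tw
  congr 1
  ext F
  simp only [Set.mem_ofPred_eq]
  constructor
  · rintro ⟨G, hG, rfl⟩
    simpa using hG
  · intro h
    exact ⟨_, h, by simp⟩

lemma toSys_lcomp (E : Finset α) (f : Finset α → ZMod 2) (v : α) :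
    (toSys E f).lcomp v = toSys E (lc v f) := by
  unfold toSys SetSystem.lcomp lc
  congr 1
  ext F
  have key : (∃ G ∈ {F | f F = 1}, v ∉ G ∧ F = G ∪ {v}) ↔ v ∈ F ∧ f (F.erase v) = 1 := by
    constructor
    · rintro ⟨G, hG, hv, rfl⟩
      have : (G ∪ {v}).erase v = G := by grind
      simp_all
    · rintro ⟨hv, h⟩
      exact ⟨F.erase v, h, by simp, by grind⟩
  rw [Set.mem_symmDiff, Set.mem_ofPred_eq, Set.mem_ofPred_eq, Set.mem_ofPred_eq, key]
  by_cases hv : v ∈ F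
  · rcases zcases (f F) with h | h <;> rcases zcases (f (F.erase v)) with h' | h' <;>
      simp [hv, h, h', zadd]
  · simp [hv]

lemma reach_trans {D₁ D₂ D₃ : SetSystem α} (h : TwistLcompReach D₁ D₂)
    (h' : TwistLcompReach D₂ D₃) : TwistLcompReach D₁ D₃ := by
  induction h with
  | refl => exact h'
  | twist e _ he ih => exact .twist e (ih h') he
  | lcomp e _ he ih => exact .lcomp e (ih h') he

lemma VF.tw {E : Finset α} {f : Finset α → ZMod 2} (h : VF E f) {v : α} (hv : v ∈ E) :
    VF E (tw v f) := by
  intro D' hD'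
  rw [← toSys_twist] at hD'
  exact h D' (reach_trans hD' (.twist v (.refl _) hv))

lemma VF.lc {E : Finset α} {f : Finset α → ZMod 2} (h : VF E f) {v : α} (hv : v ∈ E) :
    VF E (lc v f) := by
  intro D' hD'
  rw [← toSys_lcomp] at hD'
  exact h D' (reach_trans hD' (.lcomp v (.refl _) hv))

lemma VF.ex {E : Finset α} {f : Finset α → ZMod 2} (h : VF E f) {F₁ F₂ : Finset α}
    (h₁ : f F₁ = 1) (h₂ : f F₂ = 1) {x : α} (hx : x ∈ F₁ ∆ F₂) :
    ∃ y ∈ F₁ ∆ F₂, f (F₁ ∆ {x, y}) = 1 :=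
  (h _ (.refl _)).2.2 F₁ h₁ F₂ h₂ x hx

lemma tws_insert (f : Finset α → ZMod 2) {v : α} {A : Finset α} (hv : v ∉ A) :
    tws (insert v A) f = tw v (tws A f) := by
  funext F
  unfold tws tw
  congr 1
  ext x
  simp only [Finset.mem_symmDiff, Finset.mem_insert, Finset.mem_singleton]
  grind

lemma tws_empty (f : Finset α → ZMod 2) : tws ∅ f = f := by
  funext F
  simp [tws, sd_empty]

lemma VF.tws {E : Finset α} {f : Finset α → ZMod 2} (h : VF E f) {A : Finset α} (hA : A ⊆ E) :
    VF E (tws A f) := by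
  induction A using Finset.induction_on with
  | empty => rwa [tws_empty]
  | insert v A hv ih =>
    rw [tws_insert f hv]
    exact (ih fun x hx => hA (by simp [hx])).tw (hA (by simp))

lemma tw_tw (v : α) (f : Finset α → ZMod 2) : tw v (tw v f) = f := by
  funext F
  simp [tw]

lemma lc_lc (v : α) (f : Finset α → ZMod 2) : lc v (lc v f) = f := by
  funext F
  unfold lc
  by_cases hv : v ∈ F <;> simp [hv, add_assoc, zadd]

/-! ### Separators -/

lemma Sep.compl {E : Finset α} {f : Finset α → ZMod 2} {A : Finset α} (h : Sep E f A) :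
    Sep E f (E \ A) := by
  obtain ⟨hA, g, k, hf⟩ := h
  refine ⟨Finset.sdiff_subset, k, g, fun F hF => ?_⟩
  have h1 : F ∩ (E \ A) = F \ A := by grind
  have h2 : F \ (E \ A) = F ∩ A := by grind
  rw [h1, h2, hf F hF, mul_comm]

lemma sep_compl_iff {E : Finset α} {f : Finset α → ZMod 2} {A : Finset α} (hA : A ⊆ E) :
    Sep E f (E \ A) ↔ Sep E f A := by
  refine ⟨fun h => ?_, Sep.compl⟩
  have := h.compl
  rwa [Finset.sdiff_sdiff_eq_self hA] at this

/-- Twists by an element of `A` act on the factor over `A` only. -/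
lemma Sep.tw_mem {E : Finset α} {f : Finset α → ZMod 2} {A : Finset α} (h : Sep E f A) {v : α}
    (hv : v ∈ A) : Sep E (tw v f) A := by
  obtain ⟨hA, g, k, hf⟩ := h
  refine ⟨hA, tw v g, k, fun F hF => ?_⟩
  have h0 : F ∆ {v} ⊆ E := by
    intro x hx
    simp only [Finset.mem_symmDiff, Finset.mem_singleton] at hx
    grind
  have h1 : (F ∆ {v}) ∩ A = (F ∩ A) ∆ {v} := by
    ext x
    simp only [Finset.mem_symmDiff, Finset.mem_singleton, Finset.mem_inter]
    grind
  have h2 : (F ∆ {v}) \ A = F \ A := by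
    ext x
    simp only [Finset.mem_symmDiff, Finset.mem_singleton, Finset.mem_sdiff]
    grind
  simp only [tw]
  rw [hf _ h0, h1, h2]

/-- Loop complementations at an element of `A` act on the factor over `A` only. -/
lemma Sep.lc_mem {E : Finset α} {f : Finset α → ZMod 2} {A : Finset α} (h : Sep E f A) {v : α}
    (hv : v ∈ A) : Sep E (lc v f) A := by
  obtain ⟨hA, g, k, hf⟩ := h
  refine ⟨hA, lc v g, k, fun F hF => ?_⟩
  have h0 : F.erase v ⊆ E := (Finset.erase_subset _ _).trans hF
  have h1 : (F.erase v) ∩ A = (F ∩ A).erase v := by grind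
  have h2 : (F.erase v) \ A = F \ A := by grind
  simp only [lc, Finset.mem_inter, hv, and_true]
  rw [hf _ hF, hf _ h0, h1, h2]
  split_ifs <;> ring

lemma Sep.tw {E : Finset α} {f : Finset α → ZMod 2} {A : Finset α} (h : Sep E f A) {v : α}
    (hv : v ∈ E) : Sep E (tw v f) A := by
  by_cases hA : v ∈ A
  · exact h.tw_mem hA
  · exact (sep_compl_iff h.1).1 (h.compl.tw_mem (by simp [hv, hA]))

lemma Sep.lc {E : Finset α} {f : Finset α → ZMod 2} {A : Finset α} (h : Sep E f A) {v : α}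
    (hv : v ∈ E) : Sep E (lc v f) A := by
  by_cases hA : v ∈ A
  · exact h.lc_mem hA
  · exact (sep_compl_iff h.1).1 (h.compl.lc_mem (by simp [hv, hA]))

lemma Conn.tw {E : Finset α} {f : Finset α → ZMod 2} (h : Conn E f) {v : α} (hv : v ∈ E) :
    Conn E (tw v f) := by
  intro A hA
  have := hA.tw hv
  rw [tw_tw] at this
  exact h A this

lemma Conn.lc {E : Finset α} {f : Finset α → ZMod 2} (h : Conn E f) {v : α} (hv : v ∈ E) :
    Conn E (lc v f) := by
  intro A hA
  have := hA.lc hv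
  rw [lc_lc] at this
  exact h A this

lemma Sep.tws {E : Finset α} {f : Finset α → ZMod 2} {B : Finset α} (h : Sep E f B) {A : Finset α}
    (hA : A ⊆ E) : Sep E (tws A f) B := by
  induction A using Finset.induction_on with
  | empty => rwa [tws_empty]
  | insert v A hv ih =>
    rw [tws_insert f hv]
    exact (ih fun x hx => hA (by simp [hx])).tw (hA (by simp))

lemma Conn.tws {E : Finset α} {f : Finset α → ZMod 2} (h : Conn E f) {A : Finset α}
    (hA : A ⊆ E) : Conn E (tws A f) := by
  induction A using Finset.induction_on with
  | empty => rwa [tws_empty]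
  | insert v A hv ih =>
    rw [tws_insert f hv]
    exact (ih fun x hx => hA (by simp [hx])).tw (hA (by simp))

/-- When the empty set is feasible, a separator splits pairs multiplicatively. -/
lemma Sep.pair {E : Finset α} {f : Finset α → ZMod 2} {A : Finset α} (h : Sep E f A)
    (h0 : f ∅ = 1) {x y : α} (hx : x ∈ A) (hy : y ∈ E) (hyA : y ∉ A) :
    f {x, y} = f {x} * f {y} := by
  obtain ⟨hA, g, k, hf⟩ := h
  have hxE := hA hx
  have e1 : ({x, y} : Finset α) ∩ A = {x} := by grind
  have e2 : ({x, y} : Finset α) \ A = {y} := by grind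
  have e3 : ({x} : Finset α) ∩ A = {x} := by grind
  have e4 : ({x} : Finset α) \ A = ∅ := by grind
  have e5 : ({y} : Finset α) ∩ A = ∅ := by grind
  have e6 : ({y} : Finset α) \ A = {y} := by grind
  have f1 := hf {x, y} (by grind)
  have f2 := hf {x} (by grind)
  have f3 := hf {y} (by grind)
  have f4 := hf ∅ (by grind)
  rw [e1, e2] at f1
  rw [e3, e4] at f2
  rw [e5, e6] at f3
  simp only [Finset.empty_inter, Finset.empty_sdiff, h0] at f4
  rw [f1, f2, f3]
  linear_combination (g {x} * k {y}) * f4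

/-! ### The fundamental graph determines the separators -/

/-- With `∅` feasible, no edge of the fundamental graph joins `A` to `E \ A`. -/
def Cross (E : Finset α) (f : Finset α → ZMod 2) (A : Finset α) : Prop :=
  ∀ x ∈ A, ∀ y ∈ E, y ∉ A → f {x, y} = f {x} * f {y}

lemma Cross.compl {E : Finset α} {f : Finset α → ZMod 2} {A : Finset α} (h : Cross E f A) :
    Cross E f (E \ A) := by
  intro x hx y hy hyA
  rw [Finset.pair_comm, h y (by grind) x (by grind) (by grind), mul_comm]

lemma cross_compl_iff {E : Finset α} {f : Finset α → ZMod 2} {A : Finset α} (hA : A ⊆ E) :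
    Cross E f (E \ A) ↔ Cross E f A := by
  refine ⟨fun h => ?_, Cross.compl⟩
  have := h.compl
  rwa [Finset.sdiff_sdiff_eq_self hA] at this

/-- If `∅` is feasible and `{x}`, `{y}` are not, then `{x, y}` is feasible whenever `{x, y, z}`
is. -/
lemma triple {E : Finset α} {f : Finset α → ZMod 2} (h : VF E f) (h0 : f ∅ = 1)
    {x y z : α} (hx : f {x} = 0) (hy : f {y} = 0)
    (hxz : x ≠ z) (hyz : y ≠ z) (hxy : x ≠ y) (hf : f {x, y, z} = 1) : f {x, y} = 1 := by
  obtain ⟨w, hw, hw'⟩ := h.ex (x := z) hf h0 (by simp [sd_empty])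
  have : w = x ∨ w = y ∨ w = z := by simpa [sd_empty] using hw
  rcases this with rfl | rfl | rfl
  · have : ({w, y, z} : Finset α) ∆ {z, w} = {y} := by
      ext t; simp only [Finset.mem_symmDiff, Finset.mem_insert, Finset.mem_singleton]; grind
    rw [this, hy] at hw'; simp at hw'
  · have : ({x, w, z} : Finset α) ∆ {z, w} = {x} := by
      ext t; simp only [Finset.mem_symmDiff, Finset.mem_insert, Finset.mem_singleton]; grind
    rw [this, hx] at hw'; simp at hw'
  · have : ({x, y, w} : Finset α) ∆ {w, w} = {x, y} := by
      ext t; simp only [Finset.mem_symmDiff, Finset.mem_insert, Finset.mem_singleton]; grind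
    rwa [this] at hw'

/-- A feasible set contains, for each of its elements `y`, an edge of the fundamental graph
at `y`. -/
lemma exists_edge {E : Finset α} {f : Finset α → ZMod 2} (h : VF E f) (h0 : f ∅ = 1)
    {F : Finset α} {y : α} (hy : f {y} = 0) (hyF : y ∈ F) (hF : f F = 1) :
    ∃ z ∈ F, z ≠ y ∧ f {y, z} = 1 := by
  obtain ⟨z, hz, hz'⟩ := h.ex (x := y) (F₁ := ∅) h0 hF (by simpa [empty_sd] using hyF)
  have hz2 : z ∈ F := by simpa [empty_sd] using hz
  have hz3 : f {y, z} = 1 := by simpa [empty_sd] using hz'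
  refine ⟨z, hz2, ?_, hz3⟩
  rintro rfl
  simp [hy] at hz3

/-- Twisting by an edge inside `A` creates no fundamental edge between `A` and its complement. -/
lemma cross_tws {E : Finset α} {f : Finset α → ZMod 2} {A : Finset α} (h : VF E f)
    (h0 : f ∅ = 1) (h1 : ∀ x ∈ E, f {x} = 0) (hA : A ⊆ E) (hc : Cross E f A)
    {u v : α} (hu : u ∈ A) (hv : v ∈ A) (huv : u ≠ v) :
    Cross E (tws {u, v} f) A := by
  intro x hx y hy hyA
  have hz : ∀ a ∈ A, f {a, y} = 0 := fun a ha => by rw [hc a ha y hy hyA, h1 y hy, mul_zero]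
  have hyu : y ≠ u := by rintro rfl; exact hyA hu
  have hyv : y ≠ v := by rintro rfl; exact hyA hv
  have hyx : y ≠ x := by rintro rfl; exact hyA hx
  have gy : tws {u, v} f {y} = 0 := by
    have : ({y} : Finset α) ∆ {u, v} = {u, y, v} := by
      ext t; simp only [Finset.mem_symmDiff, Finset.mem_insert, Finset.mem_singleton]; grind
    refine zne _ fun hh => ?_
    simp only [tws] at hh
    rw [this] at hh
    have := triple h h0 (h1 u (hA hu)) (h1 y hy) huv hyv (Ne.symm hyu) hh
    simp [hz u hu] at this
  rw [gy, mul_zero]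
  simp only [tws]
  by_cases hxu : x = u
  · subst hxu
    have : ({x, y} : Finset α) ∆ {x, v} = {v, y} := by
      ext t; simp only [Finset.mem_symmDiff, Finset.mem_insert, Finset.mem_singleton]; grind
    rw [this, hz v hv]
  by_cases hxv : x = v
  · subst hxv
    have : ({x, y} : Finset α) ∆ {u, x} = {u, y} := by
      ext t; simp only [Finset.mem_symmDiff, Finset.mem_insert, Finset.mem_singleton]; grind
    rw [this, hz u hu]
  have e : ({x, y} : Finset α) ∆ {u, v} = {x, y, u, v} := by
    ext t; simp only [Finset.mem_symmDiff, Finset.mem_insert, Finset.mem_singleton]; grind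
  rw [e]
  refine zne _ fun hh => ?_
  obtain ⟨z, hz1, hz2, hz3⟩ := exists_edge h h0 (h1 y hy) (by simp) hh
  have hzA : z ∈ A := by
    simp only [Finset.mem_insert, Finset.mem_singleton] at hz1
    grind
  rw [Finset.pair_comm, hz z hzA] at hz3
  simp at hz3

/-- Feasible edges on the two sides of a cut without fundamental edges combine to a feasible
set. -/
lemma edge_edge {E : Finset α} {f : Finset α → ZMod 2} {A : Finset α} (h : VF E f)
    (h1 : ∀ x ∈ E, f {x} = 0) (hA : A ⊆ E) (hc : Cross E f A)
    {u v x y : α} (hu : u ∈ A) (hv : v ∈ A) (hx : x ∈ E) (hxA : x ∉ A) (hy : y ∈ E)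
    (hyA : y ∉ A) (huv' : u ≠ v) (hxy' : x ≠ y) (huv : f {u, v} = 1) (hxy : f {x, y} = 1)
    (h0 : f ∅ = 1) :
    f {u, v, x, y} = 1 := by
  have hcz : ∀ a ∈ A, ∀ b ∈ E, b ∉ A → f {a, b} = 0 := fun a ha b hb hbA => by
    rw [hc a ha b hb hbA, h1 b hb, mul_zero]
  have nux : u ≠ x := by rintro rfl; exact hxA hu
  have nuy : u ≠ y := by rintro rfl; exact hyA hu
  have nvx : v ≠ x := by rintro rfl; exact hxA hv
  have nvy : v ≠ y := by rintro rfl; exact hyA hv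
  have hd : ({x, y} : Finset α) ∆ {u, v} = {u, v, x, y} := by
    ext t; simp only [Finset.mem_symmDiff, Finset.mem_insert, Finset.mem_singleton]; grind
  obtain ⟨w, hw, hw'⟩ := h.ex (x := u) hxy huv (by rw [hd]; simp)
  rw [hd] at hw
  have : w = u ∨ w = v ∨ w = x ∨ w = y := by simpa using hw
  rcases this with rfl | rfl | rfl | rfl
  · have e : ({x, y} : Finset α) ∆ {w, w} = {w, x, y} := by
      ext t; simp only [Finset.mem_symmDiff, Finset.mem_insert, Finset.mem_singleton]; grind
    rw [e] at hw'
    have := triple h h0 (h1 w (hA hu)) (h1 x hx) nuy hxy' nux hw'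
    simp [hcz w hu x hx hxA] at this
  · have e : ({x, y} : Finset α) ∆ {u, w} = {u, w, x, y} := by
      ext t; simp only [Finset.mem_symmDiff, Finset.mem_insert, Finset.mem_singleton]; grind
    rwa [e] at hw'
  · have e : ({w, y} : Finset α) ∆ {u, w} = {u, y} := by
      ext t; simp only [Finset.mem_symmDiff, Finset.mem_insert, Finset.mem_singleton]; grind
    rw [e, hcz u hu y hy hyA] at hw'
    simp at hw'
  · have e : ({x, w} : Finset α) ∆ {u, w} = {u, x} := by
      ext t; simp only [Finset.mem_symmDiff, Finset.mem_insert, Finset.mem_singleton]; grind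
    rw [e, hcz u hu x hx hxA] at hw'
    simp at hw'

/-- The inductive step for `factor`, when no singleton is feasible: twisting by an edge inside
`A` and by an edge outside `A` reduces to smaller sets. -/
lemma factor_normal {E A : Finset α} (hA : A ⊆ E) (n : ℕ)
    (ih : ∀ f : Finset α → ZMod 2, VF E f → f ∅ = 1 → Cross E f A →
      ∀ F ⊆ E, F.card < n → f F = f (F ∩ A) * f (F \ A))
    (f : Finset α → ZMod 2) (h : VF E f) (h0 : f ∅ = 1) (h1 : ∀ x ∈ E, f {x} = 0)
    (hc : Cross E f A) (F : Finset α) (hF : F ⊆ E) (hn : F.card ≤ n) :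
    f F = f (F ∩ A) * f (F \ A) := by
  have hcz : ∀ a ∈ A, ∀ b ∈ E, b ∉ A → f {a, b} = 0 := fun a ha b hb hbA => by
    rw [hc a ha b hb hbA, h1 b hb, mul_zero]
  rcases (F ∩ A).eq_empty_or_nonempty with hFA | ⟨u, hu⟩
  · have : F \ A = F :=
      Finset.sdiff_eq_self_of_disjoint (Finset.disjoint_iff_inter_eq_empty.2 hFA)
    rw [hFA, this, h0, one_mul]
  rcases (F \ A).eq_empty_or_nonempty with hFB | ⟨x, hx⟩
  · have : F ∩ A = F := Finset.inter_eq_left.2 (Finset.sdiff_eq_empty_iff_subset.1 hFB)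
    rw [hFB, this, h0, mul_one]
  by_cases hone : f F = 1 ∨ (f (F ∩ A) = 1 ∧ f (F \ A) = 1)
  swap
  · rw [not_or] at hone
    rw [zne _ hone.1]
    rcases zcases (f (F ∩ A)) with h2 | h2
    · simp [h2]
    · rw [zne _ fun h3 => hone.2 ⟨h2, h3⟩, mul_zero]
  rw [Finset.mem_inter] at hu
  rw [Finset.mem_sdiff] at hx
  -- an edge inside `F ∩ A` and an edge inside `F \ A`
  obtain ⟨v, hvF, hvA, hvu, huv⟩ : ∃ v ∈ F, v ∈ A ∧ v ≠ u ∧ f {u, v} = 1 := by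
    rcases hone with h2 | ⟨h2, -⟩
    · obtain ⟨v, hv, hvu, huv⟩ := exists_edge h h0 (h1 u (hF hu.1)) hu.1 h2
      refine ⟨v, hv, ?_, hvu, huv⟩
      by_contra hvA
      simp [hcz u hu.2 v (hF hv) hvA] at huv
    · obtain ⟨v, hv, hvu, huv⟩ := exists_edge h h0 (h1 u (hF hu.1)) (by simpa using hu) h2
      rw [Finset.mem_inter] at hv
      exact ⟨v, hv.1, hv.2, hvu, huv⟩
  obtain ⟨y, hyF, hyA, hyx, hxy⟩ : ∃ y ∈ F, y ∉ A ∧ y ≠ x ∧ f {x, y} = 1 := by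
    rcases hone with h2 | ⟨-, h2⟩
    · obtain ⟨y, hy, hyx, hxy⟩ := exists_edge h h0 (h1 x (hF hx.1)) hx.1 h2
      refine ⟨y, hy, ?_, hyx, hxy⟩
      intro hyA
      rw [Finset.pair_comm, hcz y hyA x (hF hx.1) hx.2] at hxy
      simp at hxy
    · obtain ⟨y, hy, hyx, hxy⟩ := exists_edge h h0 (h1 x (hF hx.1)) (by simpa using hx) h2
      rw [Finset.mem_sdiff] at hy
      exact ⟨y, hy.1, hy.2, hyx, hxy⟩
  have huE := hF hu.1
  have hvE := hF hvF
  have hxE := hF hx.1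
  have hyE := hF hyF
  -- twisting by the edge inside `A`
  have s1 : f F = f (F ∩ A) * f ({u, v} ∪ F \ A) := by
    have hcard : (F \ {u, v}).card < n :=
      lt_of_lt_of_le (Finset.card_lt_card (by grind)) hn
    have := ih (tws {u, v} f) (h.tws (by grind)) (by simpa [tws, empty_sd] using huv)
      (cross_tws h h0 h1 hA hc hu.2 hvA (Ne.symm hvu)) (F \ {u, v}) (by grind) hcard
    simp only [tws] at this
    have e1 : (F \ {u, v}) ∆ {u, v} = F := by
      ext t
      simp only [Finset.mem_symmDiff, Finset.mem_insert, Finset.mem_singleton, Finset.mem_sdiff]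
      grind
    have e2 : (F \ {u, v} ∩ A) ∆ {u, v} = F ∩ A := by
      ext t
      simp only [Finset.mem_symmDiff, Finset.mem_insert, Finset.mem_singleton, Finset.mem_sdiff,
        Finset.mem_inter]
      grind
    have e3 : ((F \ {u, v}) \ A) ∆ {u, v} = {u, v} ∪ F \ A := by
      ext t
      simp only [Finset.mem_symmDiff, Finset.mem_insert, Finset.mem_singleton, Finset.mem_sdiff,
        Finset.mem_union]
      grind
    rwa [e1, e2, e3] at this
  -- twisting by the edge outside `A`
  have s2 : f ({u, v} ∪ F \ A) = f {u, v, x, y} * f (F \ A) := by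
    have hcard : ({u, v} ∪ (F \ A) \ {x, y}).card < n :=
      lt_of_lt_of_le (Finset.card_lt_card (by grind)) hn
    have hc' : Cross E (tws {x, y} f) A := (cross_compl_iff hA).1
      (cross_tws h h0 h1 Finset.sdiff_subset hc.compl (by grind) (by grind) (Ne.symm hyx))
    have := ih (tws {x, y} f) (h.tws (by grind)) (by simpa [tws, empty_sd] using hxy) hc'
      ({u, v} ∪ (F \ A) \ {x, y}) (by grind) hcard
    simp only [tws] at this
    have e1 : ({u, v} ∪ (F \ A) \ {x, y}) ∆ {x, y} = {u, v} ∪ F \ A := by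
      ext t
      simp only [Finset.mem_symmDiff, Finset.mem_insert, Finset.mem_singleton, Finset.mem_sdiff,
        Finset.mem_union]
      grind
    have e2 : (({u, v} ∪ (F \ A) \ {x, y}) ∩ A) ∆ {x, y} = {u, v, x, y} := by
      ext t
      simp only [Finset.mem_symmDiff, Finset.mem_insert, Finset.mem_singleton, Finset.mem_sdiff,
        Finset.mem_inter, Finset.mem_union]
      grind
    have e3 : (({u, v} ∪ (F \ A) \ {x, y}) \ A) ∆ {x, y} = F \ A := by
      ext t
      simp only [Finset.mem_symmDiff, Finset.mem_insert, Finset.mem_singleton, Finset.mem_sdiff,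
        Finset.mem_union]
      grind
    rwa [e1, e2, e3] at this
  rw [s1, s2, edge_edge h h1 hA hc hu.2 hvA hxE hx.2 hyE hyA (Ne.symm hvu) (Ne.symm hyx) huv hxy h0,
    one_mul]

lemma lc_single_self {f : Finset α → ZMod 2} (u : α) : lc u f {u} = f {u} + f ∅ := by
  simp [lc]

lemma lc_empty {f : Finset α → ZMod 2} (u : α) : lc u f ∅ = f ∅ := by
  simp [lc]

lemma lc_single_ne {f : Finset α → ZMod 2} {u x : α} (h : x ≠ u) : lc u f {x} = f {x} := by
  simp [lc, Ne.symm h]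

lemma Cross.lc_mem {E : Finset α} {f : Finset α → ZMod 2} {A : Finset α} (hc : Cross E f A)
    (h0 : f ∅ = 1) {u : α} (hu : u ∈ A) : Cross E (lc u f) A := by
  intro x hx y hy hyA
  have hyu : y ≠ u := by rintro rfl; exact hyA hu
  rw [lc_single_ne hyu]
  by_cases hxu : x = u
  · subst hxu
    have e : ({x, y} : Finset α).erase x = {y} := by grind
    rw [lc_single_self, h0, add_mul, one_mul, ← hc x hx y hy hyA]
    simp [lc, e]
  · rw [lc_single_ne hxu, ← hc x hx y hy hyA]
    simp [lc, Ne.symm hxu, Ne.symm hyu]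

lemma Cross.lc {E : Finset α} {f : Finset α → ZMod 2} {A : Finset α} (hc : Cross E f A)
    (hA : A ⊆ E) (h0 : f ∅ = 1) {u : α} (hu : u ∈ E) : Cross E (lc u f) A := by
  by_cases huA : u ∈ A
  · exact hc.lc_mem h0 huA
  · exact (cross_compl_iff hA).1 (hc.compl.lc_mem h0 (by simp [hu, huA]))

/-- If no fundamental edge crosses `A`, feasibility is decided separately inside and outside
`A`. -/
lemma factor {E A : Finset α} (hA : A ⊆ E) (n : ℕ) :
    ∀ f : Finset α → ZMod 2, VF E f → f ∅ = 1 → Cross E f A →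
      ∀ F ⊆ E, F.card < n → f F = f (F ∩ A) * f (F \ A) := by
  induction n with
  | zero => intro f _ _ _ F _ hn; omega
  | succ n ih =>
    -- loop complementations remove the feasible singletons, which are collected in `N`
    have key : ∀ N : Finset α, ∀ f : Finset α → ZMod 2, VF E f → f ∅ = 1 → Cross E f A →
        (∀ x ∈ E, x ∉ N → f {x} = 0) →
        ∀ F ⊆ E, F.card ≤ n → f F = f (F ∩ A) * f (F \ A) := by
      intro N
      induction N using Finset.induction_on with
      | empty =>
        intro f h h0 hc h1 F hF hn
        exact factor_normal hA n ih f h h0 (fun x hx => h1 x hx (by simp)) hc F hF hn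
      | insert u N hu ihN =>
        intro f h h0 hc h1 F hF hn
        by_cases huE : u ∈ E ∧ f {u} = 1
        swap
        · refine ihN f h h0 hc (fun x hx hxN => ?_) F hF hn
          by_cases hxu : x = u
          · subst hxu
            exact zne _ fun h2 => huE ⟨hx, h2⟩
          · exact h1 x hx (by simp [hxu, hxN])
        obtain ⟨huE, hfu⟩ := huE
        have key := ihN (lc u f) (h.lc huE) (by rwa [lc_empty]) (hc.lc hA h0 huE) (by
          intro x hx hxN
          by_cases hxu : x = u
          · subst hxu
            rw [lc_single_self, h0, hfu]; rfl
          · rw [lc_single_ne hxu]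
            exact h1 x hx (by simp [hxu, hxN])) F hF hn
        by_cases huF : u ∈ F
        swap
        · simpa [lc, huF] using key
        have hlt : (F.erase u).card < n :=
          lt_of_lt_of_le (Finset.card_erase_lt_of_mem huF) hn
        have k2 := ih f h h0 hc (F.erase u) ((Finset.erase_subset _ _).trans hF) hlt
        by_cases huA : u ∈ A
        · have e1 : (F.erase u) ∩ A = (F ∩ A).erase u := by grind
          have e2 : (F.erase u) \ A = F \ A := by grind
          rw [e1, e2] at k2
          simp only [lc, huF, Finset.mem_inter, huA, Finset.mem_sdiff, and_self, if_true,
            not_true_eq_false, and_false, if_false] at key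
          linear_combination key - k2
        · have e1 : (F.erase u) ∩ A = F ∩ A := by grind
          have e2 : (F.erase u) \ A = (F \ A).erase u := by grind
          rw [e1, e2] at k2
          simp only [lc, huF, Finset.mem_inter, huA, Finset.mem_sdiff, if_true,
            not_false_eq_true, and_self, and_false, if_false] at key
          linear_combination key - k2
    intro f h h0 hc F hF hn
    exact key E f h h0 hc (fun x hx hx' => absurd hx hx') F hF (by omega)

lemma Cross.sep {E A : Finset α} {f : Finset α → ZMod 2} (hc : Cross E f A) (hA : A ⊆ E)
    (h : VF E f) (h0 : f ∅ = 1) : Sep E f A :=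
  ⟨hA, f, f, fun F hF => factor hA (F.card + 1) f h h0 hc F hF (by omega)⟩

/-! ### Two disconnected minors at an element -/

lemma join_tw (e v : α) (hv : v ≠ e) (p q : Finset α → ZMod 2) :
    tw v (join e p q) = join e (tw v p) (tw v q) := by
  funext F
  have h1 : e ∈ F ∆ {v} ↔ e ∈ F := by
    simp [Finset.mem_symmDiff, Ne.symm hv]
  have h2 : (F ∆ {v}).erase e = (F.erase e) ∆ {v} := by
    ext t
    simp only [Finset.mem_symmDiff, Finset.mem_erase, Finset.mem_singleton]
    grind
  simp only [tw, join, h1, h2]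

lemma join_tws (e : α) (A : Finset α) (hA : e ∉ A) (p q : Finset α → ZMod 2) :
    tws A (join e p q) = join e (tws A p) (tws A q) := by
  induction A using Finset.induction_on with
  | empty => simp [tws_empty]
  | insert v A hv ih =>
    simp only [Finset.mem_insert, not_or] at hA
    rw [tws_insert _ hv, tws_insert _ hv, tws_insert _ hv, ih hA.2, join_tw e v (Ne.symm hA.1)]

lemma join_lc (e v : α) (hv : v ≠ e) (p q : Finset α → ZMod 2) :
    lc v (join e p q) = join e (lc v p) (lc v q) := by
  funext F
  by_cases he : e ∈ F <;> by_cases hvF : v ∈ F <;>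
    simp [lc, join, he, hvF, hv, Ne.symm hv, Finset.erase_right_comm]

lemma join_tw_self (e : α) (p q : Finset α → ZMod 2) :
    tw e (join e p q) = join e q p := by
  funext F
  by_cases he : e ∈ F
  · have h1 : F ∆ {e} = F.erase e := by
      ext t
      simp only [Finset.mem_symmDiff, Finset.mem_erase, Finset.mem_singleton]
      grind
    simp [tw, join, he, h1]
  · have h1 : F ∆ {e} = insert e F := by
      ext t
      simp only [Finset.mem_symmDiff, Finset.mem_insert, Finset.mem_singleton]
      grind
    simp [tw, join, he, h1]

lemma join_lc_self (e : α) (p q : Finset α → ZMod 2) :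
    lc e (join e p q) = join e p (fun F => q F + p F) := by
  funext F
  by_cases he : e ∈ F <;> simp [lc, join, he]

section minors

variable {E : Finset α} {e : α} {p q : Finset α → ZMod 2}

/-- If no fundamental edge joins `e` to `X ∩ Y`, where `X` and `Y` are separators of `p` and
of `q`, then `X ∩ Y` is a separator of the whole. -/
lemma sep_inter (he : e ∈ E) (h : VF E (join e p (fun F => q F + p F)))
    (hp0 : p ∅ = 1) (hq0 : q ∅ = 1) (hp1 : ∀ x ∈ E.erase e, p {x} = 0)
    {X Y : Finset α} (hX : Sep (E.erase e) p X) (hY : Sep (E.erase e) q Y)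
    (hN : ∀ x ∈ X ∩ Y, q {x} = 0) :
    Sep E (join e p (fun F => q F + p F)) (X ∩ Y) := by
  set k := join e p (fun F => q F + p F) with hk
  have hXE : X ⊆ E.erase e := hX.1
  have hsub : X ∩ Y ⊆ E := by grind
  have k0 : k ∅ = 1 := by simp [hk, join, hp0]
  have k1 : ∀ x ∈ E, k {x} = 0 := by
    intro x hx
    by_cases hxe : x = e
    · subst hxe; simp [hk, join, hp0, hq0, zadd]
    · simp [hk, join, Ne.symm hxe, hp1 x (by simp [hx, hxe])]
  refine Cross.sep ?_ hsub h k0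
  intro x hx y hy hyA
  have hxX := (Finset.mem_inter.1 hx).1
  have hxE := hXE hxX
  have hxe : x ≠ e := by grind
  have hNx := hN x hx
  have hex : k {e, x} = 0 := by
    have : ({e, x} : Finset α).erase e = {x} := by grind
    simp [hk, join, this, hNx, hp1 x hxE]
  rw [k1 x (hsub hx), zero_mul]
  by_cases hye : y = e
  · subst hye
    rwa [Finset.pair_comm]
  have hyE : y ∈ E.erase e := by simp [hye, hy]
  have hkp : k {x, y} = p {x, y} := by simp [hk, join, Ne.symm hxe, Ne.symm hye]
  rw [hkp]
  by_cases hyX : y ∈ X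
  swap
  · rw [hX.pair hp0 hxX hyE hyX, hp1 x hxE, zero_mul]
  have hyY : y ∉ Y := by grind
  have hqxy := hY.pair hq0 (Finset.mem_inter.1 hx).2 hyE hyY
  rw [hNx, zero_mul] at hqxy
  refine zne _ fun hpxy => ?_
  have : ({e, x, y} : Finset α).erase e = {x, y} := by grind
  have hkt : k {e, x, y} = 1 := by simp [hk, join, this, hqxy, hpxy]
  have hxy : x ≠ y := by rintro rfl; exact hyA hx
  have := triple h k0 (k1 e he) (k1 x (hsub hx)) (Ne.symm hye) hxy (Ne.symm hxe) hkt
  simp [hex] at this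

/-- Elements `u ∈ X ∩ Y` and `v ∉ X ∪ Y` cannot both be adjacent to `e`, so one of the two opposite
corners `X ∩ Y` and `Xᶜ ∩ Yᶜ` is a separator, hence empty. -/
lemma inter_or_inter (he : e ∈ E) (h : VF E (join e p (fun F => q F + p F)))
    (hconn : Conn E (join e p (fun F => q F + p F)))
    (hp0 : p ∅ = 1) (hq0 : q ∅ = 1) (hp1 : ∀ x ∈ E.erase e, p {x} = 0)
    {X Y : Finset α} (hX : Sep (E.erase e) p X) (hY : Sep (E.erase e) q Y) :
    X ∩ Y = ∅ ∨ (E.erase e \ X) ∩ (E.erase e \ Y) = ∅ := by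
  by_cases hN : ∀ x ∈ X ∩ Y, q {x} = 0
  · rcases hconn _ (sep_inter he h hp0 hq0 hp1 hX hY hN) with h1 | h1
    · exact Or.inl h1
    · have := hX.1
      grind
  by_cases hN' : ∀ x ∈ (E.erase e \ X) ∩ (E.erase e \ Y), q {x} = 0
  · rcases hconn _ (sep_inter he h hp0 hq0 hp1 hX.compl hY.compl hN') with h1 | h1
    · exact Or.inr h1
    · grind
  exfalso
  push Not at hN hN'
  obtain ⟨u, hu, hqu⟩ := hN
  obtain ⟨v, hv, hqv⟩ := hN'
  have hqu1 := (zcases (q {u})).resolve_left hqu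
  have hqv1 := (zcases (q {v})).resolve_left hqv
  simp only [Finset.mem_inter, Finset.mem_sdiff] at hu hv
  have huE := hX.1 hu.1
  have hpuv := hX.pair hp0 hu.1 hv.1.1 hv.1.2
  have hquv := hY.pair hq0 hu.2 hv.1.1 hv.2.2
  rw [hp1 u huE, zero_mul] at hpuv
  rw [hqu1, hqv1, one_mul] at hquv
  have hue : u ≠ e := by grind
  have hve : v ≠ e := by grind
  have huv : u ≠ v := by grind
  have e1 : ({u, v, e} : Finset α).erase e = {u, v} := by grind
  have kt : join e p (fun F => q F + p F) {u, v, e} = 1 := by simp [join, e1, hpuv, hquv]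
  have := triple h (by simp [join, hp0]) (x := u) (y := v) (z := e)
    (by simp [join, Ne.symm hue, hp1 u huE]) (by simp [join, Ne.symm hve, hp1 v hv.1.1])
    hue hve huv kt
  simp [join, Ne.symm hue, Ne.symm hve, hpuv] at this

/-- The case where `∅` is feasible in both minors and no singleton is feasible in `p`: two
nontrivial cuts of a set always have a pair of opposite corners that are both nonempty. -/
lemma no_two_normal (he : e ∈ E) (h : VF E (join e p q)) (hconn : Conn E (join e p q))
    (hp0 : p ∅ = 1) (hq0 : q ∅ = 1) (hp1 : ∀ x ∈ E.erase e, p {x} = 0)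
    {X Y : Finset α} (hX : Sep (E.erase e) p X) (hY : Sep (E.erase e) q Y)
    (hX0 : X ≠ ∅) (hX1 : X ≠ E.erase e) (hY0 : Y ≠ ∅) (hY1 : Y ≠ E.erase e) : False := by
  have h' := h.lc he
  have hconn' := hconn.lc he
  rw [join_lc_self] at h' hconn'
  have a1 := inter_or_inter he h' hconn' hp0 hq0 hp1 hX hY
  have a2 := inter_or_inter he h' hconn' hp0 hq0 hp1 hX hY.compl
  have hXE := hX.1
  have hYE := hY.1
  obtain ⟨x, hx⟩ := Finset.nonempty_iff_ne_empty.2 hX0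
  obtain ⟨y, hy⟩ := Finset.nonempty_iff_ne_empty.2 hY0
  obtain ⟨x', hx', hx''⟩ := Finset.exists_of_ssubset (hXE.ssubset_of_ne hX1)
  obtain ⟨y', hy', hy''⟩ := Finset.exists_of_ssubset (hYE.ssubset_of_ne hY1)
  simp only [Finset.eq_empty_iff_forall_notMem, Finset.mem_inter, Finset.mem_sdiff] at a1 a2
  have hxE := hXE hx
  have hyE := hYE hy
  rcases a1 with a1 | a1 <;> rcases a2 with a2 | a2
  · have := a1 x; have := a2 x; tauto
  · have := a1 y; have := a2 y; tauto
  · have := a1 y'; have := a2 y'; tauto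
  · have := a1 x'; have := a2 x'; tauto

/-- The feasible singletons of `p`, all contained in `N`, are removed one at a time by loop
complementation; this reduces to `no_two_normal`. -/
lemma no_two_empty (he : e ∈ E) {X Y : Finset α}
    (hX0 : X ≠ ∅) (hX1 : X ≠ E.erase e) (hY0 : Y ≠ ∅) (hY1 : Y ≠ E.erase e) (N : Finset α) :
    ∀ p q : Finset α → ZMod 2, VF E (join e p q) → Conn E (join e p q) →
      p ∅ = 1 → q ∅ = 1 → (∀ x ∈ E.erase e, x ∉ N → p {x} = 0) →
      Sep (E.erase e) p X → Sep (E.erase e) q Y → False := by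
  induction N using Finset.induction_on with
  | empty =>
    intro p q h hconn hp0 hq0 hp1 hX hY
    exact no_two_normal he h hconn hp0 hq0 (fun x hx => hp1 x hx (by simp)) hX hY hX0 hX1 hY0 hY1
  | insert u N hu ih =>
    intro p q h hconn hp0 hq0 hp1 hX hY
    by_cases huE : u ∈ E.erase e ∧ p {u} = 1
    swap
    · refine ih p q h hconn hp0 hq0 (fun x hx hxN => ?_) hX hY
      by_cases hxu : x = u
      · subst hxu
        exact zne _ fun h2 => huE ⟨hx, h2⟩
      · exact hp1 x hx (by simp [hxu, hxN])
    obtain ⟨huE, hpu⟩ := huE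
    have hue : u ≠ e := by grind
    have huE' : u ∈ E := by grind
    refine ih (lc u p) (lc u q) ?_ ?_ (by rwa [lc_empty]) (by rwa [lc_empty]) ?_
      (hX.lc huE) (hY.lc huE)
    · rw [← join_lc e u hue]; exact h.lc huE'
    · rw [← join_lc e u hue]; exact hconn.lc huE'
    · intro x hx hxN
      by_cases hxu : x = u
      · subst hxu
        rw [lc_single_self, hp0, hpu]; rfl
      · rw [lc_single_ne hxu]
        exact hp1 x hx (by simp [hxu, hxN])

/-- Twisting by a set feasible in both minors makes `∅` feasible in both. -/
lemma no_two_common (he : e ∈ E) {X Y : Finset α}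
    (hX0 : X ≠ ∅) (hX1 : X ≠ E.erase e) (hY0 : Y ≠ ∅) (hY1 : Y ≠ E.erase e)
    (h : VF E (join e p q)) (hconn : Conn E (join e p q)) {A : Finset α} (hA : A ⊆ E.erase e)
    (hp : p A = 1) (hq : q A = 1)
    (hX : Sep (E.erase e) p X) (hY : Sep (E.erase e) q Y) : False := by
  have heA : e ∉ A := fun h => by simpa using hA h
  have hA' : A ⊆ E := hA.trans (Finset.erase_subset _ _)
  refine no_two_empty he hX0 hX1 hY0 hY1 E (tws A p) (tws A q) ?_ ?_ (by simpa [tws, empty_sd] using hp)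
    (by simpa [tws, empty_sd] using hq) ?_ (hX.tws hA) (hY.tws hA)
  · rw [← join_tws e A heA]; exact h.tws hA'
  · rw [← join_tws e A heA]; exact hconn.tws hA'
  · intro x hx hx'
    exact absurd (Finset.mem_of_mem_erase hx) hx'

/-- Two of the three minors at `e` of a connected vf-safe delta-matroid cannot both have proper
separators. -/
lemma no_two (he : e ∈ E) {X Y : Finset α}
    (hX0 : X ≠ ∅) (hX1 : X ≠ E.erase e) (hY0 : Y ≠ ∅) (hY1 : Y ≠ E.erase e)
    (h : VF E (join e p q)) (hconn : Conn E (join e p q)) {A B : Finset α} (hA : A ⊆ E.erase e)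
    (hB : B ⊆ E.erase e) (hp : p A = 1) (hq : q B = 1)
    (hX : Sep (E.erase e) p X) (hY : Sep (E.erase e) q Y) : False := by
  have heA : e ∉ A := fun h => by simpa using hA h
  have heB : e ∉ B := fun h => by simpa using hB h
  have hA' : A ⊆ E := hA.trans (Finset.erase_subset _ _)
  have h' := h.tws hA'
  have hconn' := hconn.tws hA'
  rw [join_tws e A heA] at h' hconn'
  have hX' := hX.tws hA
  have hY' := hY.tws hA
  have hp' : tws A p ∅ = 1 := by simpa [tws, empty_sd] using hp
  have hq' : tws A q (B ∆ A) = 1 := by simpa [tws, symmDiff_assoc, sd_empty] using hq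
  have hC : ∀ z ∈ B ∆ A, z ∈ E.erase e := by
    intro z hz
    rw [Finset.mem_symmDiff] at hz
    grind
  generalize tws A p = p' at *
  generalize tws A q = q' at *
  generalize B ∆ A = C at *
  have heC : e ∉ C := fun h => by simpa using hC e h
  obtain ⟨z, hz, hz'⟩ := h'.ex (F₁ := ∅) (F₂ := insert e C) (x := e)
    (by simpa [join] using hp') (by simpa [join, heC] using hq') (by simp [empty_sd])
  by_cases hq0 : q' ∅ = 1
  · exact no_two_common he hX0 hX1 hY0 hY1 h' hconn' (Finset.empty_subset _) hp' hq0 hX' hY'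
  have hz2 : z = e ∨ z ∈ C := by simpa [empty_sd] using hz
  rcases hz2 with rfl | hzC
  · simp [join, empty_sd] at hz'
    exact hq0 hz'
  have hzE := hC z hzC
  have hze : z ≠ e := by grind
  have hzE' : z ∈ E := by grind
  have e1 : ({e, z} : Finset α).erase e = {z} := by grind
  have hqz : q' {z} = 1 := by simpa [join, e1, empty_sd] using hz'
  by_cases hpz : p' {z} = 1
  · exact no_two_common he hX0 hX1 hY0 hY1 h' hconn' (by simpa using hzE) hpz hqz hX' hY'
  have h2 := h'.lc hzE'
  have hconn2 := hconn'.lc hzE'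
  rw [join_lc e z hze] at h2 hconn2
  -- loop complementation at `z` makes `{z}` feasible in both minors
  refine no_two_common he hX0 hX1 hY0 hY1 h2 hconn2 (A := {z}) (by simpa using hzE) ?_ ?_
    (hX'.lc hzE) (hY'.lc hzE)
  · rw [lc_single_self, zne _ hpz, hp', zero_add]
  · rw [lc_single_self, zne _ hq0, hqz, add_zero]

end minors

/-! ### Translation to set systems -/

lemma isSeparator_iff {E : Finset α} {f : Finset α → ZMod 2} (hf : ∀ F, f F = 1 → F ⊆ E)
    (X : Finset α) : (toSys E f).IsSeparator X ↔ Sep E f X := by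
  constructor
  · rintro ⟨hX, D₁, D₂, h1, h2, h3, h4, h5⟩
    refine ⟨hX, fun F => if F ∈ D₁.Fs then 1 else 0, fun F => if F ∈ D₂.Fs then 1 else 0,
      fun F hF => ?_⟩
    have key : f F = 1 ↔ F ∩ X ∈ D₁.Fs ∧ F \ X ∈ D₂.Fs := by
      have : f F = 1 ↔ F ∈ (toSys E f).Fs := Iff.rfl
      rw [this, h5]
      constructor
      · rintro ⟨F₁, hF₁, F₂, hF₂, rfl⟩
        have s1 := h3 F₁ hF₁
        have s2 := h4 F₂ hF₂
        rw [h1] at s1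
        rw [h2] at s2
        have e1 : (F₁ ∪ F₂) ∩ X = F₁ := by grind
        have e2 : (F₁ ∪ F₂) \ X = F₂ := by grind
        rw [e1, e2]
        exact ⟨hF₁, hF₂⟩
      · rintro ⟨a, b⟩
        exact ⟨_, a, _, b, by grind⟩
    by_cases a : F ∩ X ∈ D₁.Fs <;> by_cases b : F \ X ∈ D₂.Fs
    · simpa [a, b] using key.2 ⟨a, b⟩
    all_goals
      have : f F = 0 := zne _ fun h => by have := key.1 h; tauto
      simp [a, b, this]
  · rintro ⟨hX, g, h, hgh⟩
    refine ⟨hX, ⟨X, {F | F ⊆ X ∧ g F = 1}⟩, ⟨E \ X, {F | F ⊆ E \ X ∧ h F = 1}⟩, rfl, rfl,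
      fun F hF => hF.1, fun F hF => hF.1, ?_⟩
    have hXE : X ⊆ E := hX
    unfold toSys directSum
    congr 1
    · grind
    ext F
    simp only [Set.mem_ofPred_eq]
    constructor
    · intro hF
      have hFE := hf F hF
      rw [hgh F hFE] at hF
      have : ∀ a b : ZMod 2, a * b = 1 → a = 1 ∧ b = 1 := by decide
      obtain ⟨a, b⟩ := this _ _ hF
      exact ⟨F ∩ X, ⟨by grind, a⟩, F \ X, ⟨by grind, b⟩, by grind⟩
    · rintro ⟨F₁, ⟨s1, a⟩, F₂, ⟨s2, b⟩, rfl⟩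
      have e1 : (F₁ ∪ F₂) ∩ X = F₁ := by grind
      have e2 : (F₁ ∪ F₂) \ X = F₂ := by grind
      rw [hgh _ (by grind), e1, e2, a, b, one_mul]

lemma connected_iff {E : Finset α} {f : Finset α → ZMod 2} (hf : ∀ F, f F = 1 → F ⊆ E) :
    (toSys E f).Connected ↔ Conn E f := by
  unfold SetSystem.Connected Conn
  constructor
  · intro h A hA
    by_contra hcon
    rw [not_or] at hcon
    exact h ⟨A, (isSeparator_iff hf A).2 hA, Finset.nonempty_iff_ne_empty.2 hcon.1, hcon.2⟩
  · rintro h ⟨X, hX, hne, hXE⟩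
    rcases h X ((isSeparator_iff hf X).1 hX) with rfl | rfl
    · simp at hne
    · exact hXE rfl

lemma connected_of_E_empty {D : SetSystem α} (h : D.E = ∅) : D.Connected := by
  rintro ⟨X, hX, hne, hXE⟩
  have := hX.1
  rw [h, Finset.subset_empty] at this
  simp [this] at hne

lemma not_conn {E : Finset α} {f : Finset α → ZMod 2} (h : ¬ Conn E f) :
    ∃ A, Sep E f A ∧ A ≠ ∅ ∧ A ≠ E := by
  unfold Conn at h
  push Not at h
  simpa only [Finset.nonempty_iff_ne_empty] using h

/-- If one of the three minors at `e` has no feasible set, then `e` is a separator. -/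
lemma sep_singleton {E : Finset α} {e : α} {p q : Finset α → ZMod 2} (he : e ∈ E)
    (h : (∀ F ⊆ E.erase e, p F = 0) ∨ (∀ F ⊆ E.erase e, q F = 0) ∨
      (∀ F ⊆ E.erase e, q F + p F = 0)) : Sep E (join e p q) {e} := by
  have aux : ∀ F ⊆ E, (e ∈ F → F ∩ {e} = {e} ∧ F \ {e} = F.erase e) ∧
      (e ∉ F → F ∩ {e} = ∅ ∧ F \ {e} = F) ∧ F.erase e ⊆ E.erase e := by
    intro F hF
    refine ⟨fun h => ⟨by grind, by grind⟩, fun h => ⟨by grind, by grind⟩, by grind⟩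
  refine ⟨by simpa using he, ?_⟩
  rcases h with h | h | h
  · refine ⟨fun F => if e ∈ F then 1 else 0, q, fun F hF => ?_⟩
    obtain ⟨a, b, c⟩ := aux F hF
    by_cases heF : e ∈ F
    · simp [join, heF, a heF]
    · have : F ⊆ E.erase e := by grind
      simp [join, heF, h F this]
  · refine ⟨fun F => if e ∈ F then 0 else 1, p, fun F hF => ?_⟩
    obtain ⟨a, b, c⟩ := aux F hF
    by_cases heF : e ∈ F
    · simp [join, heF, h _ c]
    · simp [join, heF, b heF]
  · refine ⟨fun F => 1, p, fun F hF => ?_⟩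
    obtain ⟨a, b, c⟩ := aux F hF
    by_cases heF : e ∈ F
    · have h1 := h _ c
      have : ∀ x y : ZMod 2, x + y = 0 → x = y := by decide
      simp [join, heF, a heF, this _ _ h1]
    · simp [join, heF, b heF]

lemma E_delete (D : SetSystem α) (e : α) : (D.delete e).E = D.E.erase e := by
  unfold SetSystem.delete; split_ifs <;> rfl

lemma E_contract (D : SetSystem α) (e : α) : (D.contract e).E = D.E.erase e := by
  unfold SetSystem.contract; split_ifs <;> rfl

/-- The indicator of the feasible sets of `D \ e`, when `e` is not a coloop. -/
def fdel (e : α) (f : Finset α → ZMod 2) : Finset α → ZMod 2 :=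
  fun F => if e ∈ F then 0 else f F

/-- The indicator of the feasible sets of `D / e`, when `e` is not a loop. -/
def fcon (e : α) (f : Finset α → ZMod 2) : Finset α → ZMod 2 :=
  fun F => if e ∈ F then 0 else f (insert e F)

lemma join_fdel_fcon (e : α) (f : Finset α → ZMod 2) : join e (fdel e f) (fcon e f) = f := by
  funext F
  by_cases he : e ∈ F <;> simp [join, fdel, fcon, he]

lemma fcon_lc (e : α) (f : Finset α → ZMod 2) :
    fcon e (lc e f) = fun F => fcon e f F + fdel e f F := by
  funext F
  by_cases he : e ∈ F <;> simp [lc, fdel, fcon, he]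

lemma delete_toSys {E : Finset α} {f : Finset α → ZMod 2} {e : α} {F : Finset α}
    (hF : fdel e f F = 1) : (toSys E f).delete e = toSys (E.erase e) (fdel e f) := by
  have : ¬ (toSys E f).IsColoop e := by
    intro h
    unfold fdel at hF
    split_ifs at hF with h1
    · simp at hF
    · exact h1 (h F hF)
  unfold SetSystem.delete
  rw [if_neg this]
  unfold del₀ toSys fdel
  congr 1
  ext G
  by_cases h : e ∈ G <;> simp [h]

lemma contract_toSys {E : Finset α} {f : Finset α → ZMod 2} {e : α} {F : Finset α}
    (hF : fcon e f F = 1) : (toSys E f).contract e = toSys (E.erase e) (fcon e f) := by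
  have : ¬ (toSys E f).IsLoop e := by
    intro h
    unfold fcon at hF
    split_ifs at hF with h1
    · simp at hF
    · exact h _ hF (by simp)
  unfold SetSystem.contract
  rw [if_neg this]
  unfold con₀ toSys fcon
  congr 1
  ext G
  simp only [Set.mem_ofPred_eq]
  constructor
  · rintro ⟨H, hH, heH, rfl⟩
    simpa [Finset.insert_erase heH] using hH
  · intro h
    split_ifs at h with h1
    · simp at h
    · exact ⟨_, h, by simp, by simp [h1]⟩

end ChainVfSafe

open ChainVfSafe in
/-- **Chain theorem for vf-safe delta-matroids.** Let `D` be a connected vf-safe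
delta-matroid. If `e ∈ E(D)`, then at least two of `D∖e`, `D/e` and `D+e/e` are
connected. -/
theorem chain_vf_safe_delta_matroid {α : Type*} [DecidableEq α]
    (D : SetSystem α) (hD : D.IsDeltaMatroid) (hvf : D.IsVfSafe)
    (hConn : D.Connected) (e : α) (he : e ∈ D.E) :
    ((D.delete e).Connected ∧ (D.contract e).Connected) ∨
    ((D.delete e).Connected ∧ ((D.lcomp e).contract e).Connected) ∨
    ((D.contract e).Connected ∧ ((D.lcomp e).contract e).Connected) := by
  obtain ⟨E, f, rfl⟩ : ∃ E f, D = toSys E f :=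
    ⟨D.E, fun F => if F ∈ D.Fs then 1 else 0, by cases D; simp [toSys]⟩
  have he' : e ∈ E := he
  have hsupp : ∀ F, f F = 1 → F ⊆ E := hD.2.1
  have hC : Conn E f := (connected_iff hsupp).1 hConn
  have hV : VF E f := hvf
  by_cases hE : E = {e}
  · have h1 : (toSys E f).E.erase e = ∅ := by simp [toSys, hE]
    exact Or.inl ⟨connected_of_E_empty (by rw [E_delete, h1]),
      connected_of_E_empty (by rw [E_contract, h1])⟩
  have hne : ¬ Sep E f {e} := fun h => by
    rcases hC _ h with h1 | h1
    · simp at h1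
    · exact hE h1.symm
  rw [toSys_lcomp]
  set a := fdel e f with ha
  set b := fcon e f with hb
  have hfab : join e a b = f := join_fdel_fcon e f
  have hc : fcon e (lc e f) = fun F => b F + a F := fcon_lc e f
  rw [← hfab] at hne hC hV
  have hn1 : ¬ ∀ F ⊆ E.erase e, a F = 0 := fun h => hne (sep_singleton he' (Or.inl h))
  have hn2 : ¬ ∀ F ⊆ E.erase e, b F = 0 := fun h => hne (sep_singleton he' (Or.inr (Or.inl h)))
  have hn3 : ¬ ∀ F ⊆ E.erase e, b F + a F = 0 := fun h =>
    hne (sep_singleton he' (Or.inr (Or.inr h)))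
  push Not at hn1 hn2 hn3
  obtain ⟨A, hA, hA1⟩ := hn1
  obtain ⟨B, hB, hB1⟩ := hn2
  obtain ⟨C, hC', hC1⟩ := hn3
  replace hA1 := (zcases _).resolve_left hA1
  replace hB1 := (zcases _).resolve_left hB1
  replace hC1 := (zcases _).resolve_left hC1
  rw [delete_toSys hA1, contract_toSys hB1, contract_toSys (F := C) (by rw [hc]; exact hC1), hc,
    ← ha, ← hb]
  have sa : ∀ F, a F = 1 → F ⊆ E.erase e := by
    intro F hF
    simp only [ha, fdel] at hF
    split_ifs at hF with h1
    · simp at hF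
    · have := hsupp F hF
      grind
  have sb : ∀ F, b F = 1 → F ⊆ E.erase e := by
    intro F hF
    simp only [hb, fcon] at hF
    split_ifs at hF with h1
    · simp at hF
    · have := hsupp _ hF
      grind
  have sc : ∀ F, b F + a F = 1 → F ⊆ E.erase e := by
    intro F hF
    rcases zcases (a F) with h1 | h1
    · exact sb F (by simpa [h1] using hF)
    · exact sa F h1
  rw [connected_iff sa, connected_iff sb, connected_iff sc]
  have hVac := hV.lc he'
  have hCac := hC.lc he'
  rw [join_lc_self] at hVac hCac
  have hVbc := (hV.tw he').lc he'
  have hCbc := (hC.tw he').lc he'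
  rw [join_tw_self, join_lc_self] at hVbc hCbc
  have hcomm : (fun F => a F + b F) = fun F => b F + a F := by funext F; ring
  rw [hcomm] at hVbc hCbc
  by_cases ca : Conn (E.erase e) a
  · by_cases cb : Conn (E.erase e) b
    · exact Or.inl ⟨ca, cb⟩
    · refine Or.inr (Or.inl ⟨ca, ?_⟩)
      by_contra cc
      obtain ⟨X, hX, hX0, hX1⟩ := not_conn cb
      obtain ⟨Y, hY, hY0, hY1⟩ := not_conn cc
      exact no_two he' hX0 hX1 hY0 hY1 hVbc hCbc hB hC' hB1 hC1 hX hY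
  · obtain ⟨X, hX, hX0, hX1⟩ := not_conn ca
    refine Or.inr (Or.inr ⟨?_, ?_⟩)
    · by_contra cb
      obtain ⟨Y, hY, hY0, hY1⟩ := not_conn cb
      exact no_two he' hX0 hX1 hY0 hY1 hV hC hA hB hA1 hB1 hX hY
    · by_contra cc
      obtain ⟨Y, hY, hY0, hY1⟩ := not_conn cc
      exact no_two he' hX0 hX1 hY0 hY1 hVac hCac hA hC' hA1 hC1 hX hY
end
end
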